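/- arXiv:2312.11061 — 11 statements merged into one kernel-verified Lean document; each statement's English description precedes it below -/
import Mathlib

section
/- Fix integers n ≥ l > 1, a vector a ∈ (0,∞)^l and a constant b ≥ 0. Then there exist a vector v ∈ (0,∞)^n and a constant λ > 0 such that for every matrix F ∈ ℱ(a,b,l) and every index i ∈ {1,…,n}, ∑_{k=1}^n v_k F_{ki} ≤ −λ v_i (i.e. vᵀF ≤ −λvᵀ componentwise). -/
open Finset

/-- An `n × n` real matrix is compartmental if it is Metzler (nonnegative
off-diagonal entries) and all of its column sums are nonpositive. -/
def IsCompartmental {n : ℕ} (F : Matrix (Fin n) (Fin n) ℝ) : Prop :=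
  (∀ i j : Fin n, i ≠ j → 0 ≤ F i j) ∧ ∀ i : Fin n, (∑ k, F k i) ≤ 0

/-- The set `ℱ(a,b,l)` of compartmental matrices (indices `0`-based: paper index
`i ∈ {1,…,n}` corresponds to `i - 1 : Fin n`):
every entry strictly above the diagonal is at most `b`;
`∑_{k=i+1}^n F_{ki} ≥ a_i` for `i = 1,…,l-1`;
`∑_{k=1}^n F_{ki} ≤ -a_l` for `i = l,…,n`. -/
def MemCalF {n l : ℕ} (hl : 1 < l) (hln : l ≤ n) (a : Fin l → ℝ) (b : ℝ)
    (F : Matrix (Fin n) (Fin n) ℝ) : Prop :=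
  IsCompartmental F ∧
  (∀ i j : Fin n, i < j → F i j ≤ b) ∧
  (∀ i : Fin n, (hi : (i : ℕ) + 1 < l) →
    a ⟨i, Nat.lt_of_succ_lt hi⟩ ≤ ∑ k ∈ univ.filter (fun k : Fin n => i < k), F k i) ∧
  (∀ i : Fin n, l - 1 ≤ (i : ℕ) → (∑ k, F k i) ≤ -(a ⟨l - 1, by omega⟩))

/-!
Weight the `k`-th compartment by `v k = q ^ N - q ^ r k`, where `r k` is its position and `q` is
large. In the `i`-th entry of `vᵀ F`, nonpositivity of the column sum allows `N` to be lowered to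
`r i + 1`. After that the terms strictly below the diagonal are nonpositive, while the remaining
ones are `q ^ r i * (q - 1)` times the entries on and above the diagonal, up to an error of at most
`q ^ r i * b` per entry. Hence all that matters is that the entries on and above the diagonal sum to
at most `-α` in each column; both kinds of columns in `ℱ(a,b,l)` satisfy this, since that partial
sum is the full column sum minus the part below the diagonal.
-/

section GeometricWeights

variable {ι R : Type*} [Fintype ι] [CommRing R] [LinearOrder R] [IsStrictOrderedRing R]
  {q b : R} {m N : ℕ} {r : ι → ℕ} {f : ι → R}

lemma pow_succ_sub_pow_mul_le {j : ℕ} {x : R} (hq : 1 ≤ q) (hb : 0 ≤ b)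
    (hx : j ≠ m → 0 ≤ x) (hxb : j < m → x ≤ b) :
    (q ^ (m + 1) - q ^ j) * x ≤ q ^ m * ((q - 1) * (if j ≤ m then x else 0) + b) := by
  have hqm : 0 ≤ q ^ m := pow_nonneg (zero_le_one.trans hq) m
  have hqb : 0 ≤ q ^ m * b := mul_nonneg hqm hb
  rcases lt_trichotomy j m with hjm | rfl | hmj
  · have hqx : 0 ≤ q ^ j * x := mul_nonneg (pow_nonneg (zero_le_one.trans hq) j) (hx hjm.ne)
    calc (q ^ (m + 1) - q ^ j) * x = q ^ m * ((q - 1) * x + x) - q ^ j * x := by ring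
      _ ≤ q ^ m * ((q - 1) * x + x) := sub_le_self _ hqx
      _ ≤ q ^ m * ((q - 1) * x + b) := by gcongr; exact hxb hjm
      _ = _ := by rw [if_pos hjm.le]
  · calc (q ^ (j + 1) - q ^ j) * x = q ^ j * ((q - 1) * x) := by ring
      _ ≤ q ^ j * ((q - 1) * x + b) := by gcongr; exact le_add_of_nonneg_right hb
      _ = _ := by rw [if_pos le_rfl]
  · calc (q ^ (m + 1) - q ^ j) * x ≤ 0 :=
          mul_nonpos_of_nonpos_of_nonneg (sub_nonpos.2 (pow_le_pow_right₀ hq hmj)) (hx hmj.ne')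
      _ ≤ q ^ m * b := hqb
      _ = _ := by rw [if_neg hmj.not_ge, mul_zero, zero_add]

lemma sum_pow_succ_sub_pow_mul_le (hq : 1 ≤ q) (hb : 0 ≤ b)
    (hf : ∀ k, r k ≠ m → 0 ≤ f k) (hfb : ∀ k, r k < m → f k ≤ b) :
    ∑ k, (q ^ (m + 1) - q ^ r k) * f k ≤
      q ^ m * ((q - 1) * (∑ k with r k ≤ m, f k) + Fintype.card ι * b) :=
  calc ∑ k, (q ^ (m + 1) - q ^ r k) * f k
      ≤ ∑ k, q ^ m * ((q - 1) * (if r k ≤ m then f k else 0) + b) :=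
        sum_le_sum fun k _ => pow_succ_sub_pow_mul_le hq hb (hf k) (hfb k)
    _ = q ^ m * ((q - 1) * (∑ k with r k ≤ m, f k) + Fintype.card ι * b) := by
        rw [← mul_sum, sum_add_distrib, ← mul_sum, ← sum_filter, sum_const, card_univ,
          nsmul_eq_mul]

lemma sum_pow_sub_pow_mul_le_of_lt (hq : 1 ≤ q) (hmN : m < N) (hf : ∑ k, f k ≤ 0) :
    ∑ k, (q ^ N - q ^ r k) * f k ≤ ∑ k, (q ^ (m + 1) - q ^ r k) * f k := by
  simp only [sub_mul, sum_sub_distrib, ← mul_sum]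
  exact sub_le_sub_right (mul_le_mul_of_nonpos_right (pow_le_pow_right₀ hq hmN) hf) _

lemma sum_pow_sub_pow_mul_le_neg {α : R} (hq : 1 ≤ q) (hα : 0 ≤ α) (hb : 0 ≤ b)
    (hqα : α + Fintype.card ι * b ≤ (q - 1) * α) (hmN : m < N)
    (hf : ∀ k, r k ≠ m → 0 ≤ f k) (hfb : ∀ k, r k < m → f k ≤ b)
    (hsum : ∑ k, f k ≤ 0) (hsumα : ∑ k with r k ≤ m, f k ≤ -α) :
    ∑ k, (q ^ N - q ^ r k) * f k ≤ -α := by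
  have hbracket : (q - 1) * (∑ k with r k ≤ m, f k) + Fintype.card ι * b ≤ -α := by
    linarith [mul_le_mul_of_nonneg_left hsumα (sub_nonneg.2 hq)]
  calc ∑ k, (q ^ N - q ^ r k) * f k
      ≤ ∑ k, (q ^ (m + 1) - q ^ r k) * f k := sum_pow_sub_pow_mul_le_of_lt hq hmN hsum
    _ ≤ q ^ m * ((q - 1) * (∑ k with r k ≤ m, f k) + Fintype.card ι * b) :=
        sum_pow_succ_sub_pow_mul_le hq hb hf hfb
    _ ≤ q ^ m * -α := by gcongr
    _ ≤ -α := by linarith [le_mul_of_one_le_left hα (one_le_pow₀ hq : 1 ≤ q ^ m)]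

end GeometricWeights

theorem stmt0_general {ι K : Type*} [Fintype ι] [Field K] [LinearOrder K] [IsStrictOrderedRing K]
    (r : ι → ℕ) {α b : K} (hα : 0 < α) (hb : 0 ≤ b) :
    ∃ (v : ι → K) (lam : K), (∀ i, 0 < v i) ∧ 0 < lam ∧
      ∀ F : Matrix ι ι K,
        (∀ i j, r i ≠ r j → 0 ≤ F i j) → (∀ i, ∑ k, F k i ≤ 0) →
        (∀ i j, r i < r j → F i j ≤ b) → (∀ i, ∑ k with r k ≤ r i, F k i ≤ -α) →
        ∀ i, ∑ k, v k * F k i ≤ -lam * v i := by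
  set q : K := 2 + Fintype.card ι * b / α with hq_def
  set N : ℕ := univ.sup r + 1
  have hq : 1 < q := by
    have : 0 ≤ Fintype.card ι * b / α := by positivity
    linarith
  have hqα : α + Fintype.card ι * b = (q - 1) * α := by rw [hq_def]; field_simp; ring
  have hrN (i : ι) : r i < N := Nat.lt_succ_of_le (le_sup (mem_univ i))
  have hqN : 0 < q ^ N := pow_pos (zero_lt_one.trans hq) N
  refine ⟨fun k => q ^ N - q ^ r k, α / q ^ N, fun i => sub_pos.2 (pow_lt_pow_right₀ hq (hrN i)),
    div_pos hα hqN, fun F hF hsum hFb hsumα i => ?_⟩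
  calc ∑ k, (q ^ N - q ^ r k) * F k i
      ≤ -α := sum_pow_sub_pow_mul_le_neg hq.le hα.le hb hqα.le (hrN i) (fun k => hF k i)
        (fun k => hFb k i) (hsum i) (hsumα i)
    _ = -(α / q ^ N) * q ^ N := by field_simp
    _ ≤ -(α / q ^ N) * (q ^ N - q ^ r i) :=
        mul_le_mul_of_nonpos_left (sub_le_self _ (pow_nonneg (zero_le_one.trans hq.le) _))
          (neg_nonpos.2 (div_pos hα hqN).le)

lemma MemCalF.sum_filter_le_le_neg {n l : ℕ} {hl : 1 < l} {hln : l ≤ n} {a : Fin l → ℝ} {b α : ℝ}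
    {F : Matrix (Fin n) (Fin n) ℝ} (hF : MemCalF hl hln a b F) (hα : ∀ j, α ≤ a j) (i : Fin n) :
    ∑ k with k ≤ i, F k i ≤ -α := by
  obtain ⟨⟨hoff, hsum⟩, -, hbelow, hlast⟩ := hF
  have hsplit : ∑ k with k ≤ i, F k i + ∑ k with i < k, F k i = ∑ k, F k i := by
    simpa only [not_le] using sum_filter_add_sum_filter_not univ (· ≤ i) (F · i)
  rcases lt_or_ge ((i : ℕ) + 1) l with hi | hi
  · linarith [hsum i, hbelow i hi, hα ⟨i, Nat.lt_of_succ_lt hi⟩]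
  · have hnonneg : 0 ≤ ∑ k with i < k, F k i :=
      sum_nonneg fun k hk => hoff k i (mem_filter.1 hk).2.ne'
    linarith [hlast i (Nat.sub_le_of_le_add hi), hα ⟨l - 1, by omega⟩]

/-- for fixed `n ≥ l > 1`, `a ∈ (0,∞)^l` and `b ≥ 0`, there exist a
vector `v ∈ (0,∞)^n` and a constant `λ > 0` such that `vᵀ F ≤ -λ vᵀ`
componentwise for every `F ∈ ℱ(a,b,l)`. -/
theorem stmt0 (n l : ℕ) (hl : 1 < l) (hln : l ≤ n)
    (a : Fin l → ℝ) (ha : ∀ i, 0 < a i) (b : ℝ) (hb : 0 ≤ b) :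
    ∃ (v : Fin n → ℝ) (lam : ℝ), (∀ i, 0 < v i) ∧ 0 < lam ∧
      ∀ F : Matrix (Fin n) (Fin n) ℝ, MemCalF hl hln a b F →
        ∀ i : Fin n, (∑ k, v k * F k i) ≤ -lam * v i := by
  obtain ⟨α, hα, hαa⟩ : ∃ α, 0 < α ∧ ∀ j, α < a j := by
    simpa only [zero_add] using Pi.exists_forall_pos_add_lt (x := fun _ => 0) ha
  obtain ⟨v, lam, hv, hlam, h⟩ := stmt0_general (fun i : Fin n => (i : ℕ)) hα hb
  exact ⟨v, lam, hv, hlam, fun F hF => h F (fun i j hij => hF.1.1 i j (ne_of_apply_ne _ hij))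
    hF.1.2 hF.2.1 (hF.sum_filter_le_le_neg fun j => (hαa j).le)⟩
end

section
/- Fix integers n ≥ l > 1, a vector a ∈ (0,∞)^l, a constant b ≥ 0, and any σ ∈ (0,∞)^l. Define p ∈ ℝ^l by p_1 = σ_1 and p_i = σ_i + (b/a_i) ∑_{j=1}^{i−1} j·p_j for i = 2,…,l; define v ∈ ℝ^n by v_i = ∑_{j=i}^l p_j for i = 1,…,l−1 and v_i = p_l for i = l,…,n; and define λ = min{a_1σ_1,…,a_lσ_l} / ∑_{j=1}^l p_j. Then v ∈ (0,∞)^n, λ > 0, and for every F ∈ ℱ(a,b,l) and every index i ∈ {1,…,n}, ∑_{k=1}^n v_k F_{ki} ≤ −λ v_i. -/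
open Finset

/-!
Truncate row indices by `level k = min k (l - 1)`, so that `v k` is the tail sum of `p` from
`level k` on. Exchanging summations, the `i`-th entry of `vᵀ F` is `∑ j, p j * S j`, where `S j` is
the sum of the entries of column `i` in the rows of level at most `j`. Now `S j ≤ (j + 1) b` for `j`
below `level i`, because only entries above the diagonal occur; `S j ≤ -a j` at `j = level i`,
because `S j` is then the whole column sum if `i` is at the last level, and otherwise the rest of
the column sums to at least `a j`; and `S j ≤ 0` above, by compartmentality. The recursion for `p`
is the one that makes the term `-a j * p j` at `j = level i` absorb all the terms `(j + 1) b p j`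
below it and leave `-a j * σ j`, which is at most `-λ ∑ p`.
-/

section WeightedSums

variable {ι κ R : Type*}

theorem inf'_div_mul_le [Field R] [LinearOrder R] [IsStrictOrderedRing R] {s : Finset κ}
    (hs : s.Nonempty) {f : κ → R} (hf : ∀ i ∈ s, 0 ≤ f i) {x y : R} (hy : 0 < y) (hxy : x ≤ y)
    {i : κ} (hi : i ∈ s) : s.inf' hs f / y * x ≤ f i :=
  calc s.inf' hs f / y * x ≤ s.inf' hs f / y * y :=
        mul_le_mul_of_nonneg_left hxy (div_nonneg (le_inf' hs f hf) hy.le)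
    _ = s.inf' hs f := div_mul_cancel₀ _ hy.ne'
    _ ≤ f i := inf'_le f hi

variable [Fintype κ]

theorem pos_of_eq_add_mul_sum_lt [Preorder κ] [DecidableLT κ] [Semiring R] [PartialOrder R]
    [IsOrderedRing R] {p σ c w : κ → R} (hσ : ∀ i, 0 < σ i) (hc : ∀ i, 0 ≤ c i)
    (hw : ∀ i, 0 ≤ w i) (hp : ∀ i, p i = σ i + c i * ∑ j with j < i, w j * p j) (i : κ) :
    0 < p i := by
  induction i using WellFoundedLT.induction with
  | ind i ih =>
    rw [hp i]
    refine add_pos_of_pos_of_nonneg (hσ i) (mul_nonneg (hc i) (sum_nonneg fun j hj ↦ ?_))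
    exact mul_nonneg (hw j) (ih j (mem_filter_univ j |>.mp hj)).le

theorem sum_sum_filter_le_mul [Fintype ι] [LE κ] [DecidableLE κ] [NonUnitalSemiring R]
    (level : ι → κ) (p : κ → R) (f : ι → R) :
    ∑ k, (∑ j with level k ≤ j, p j) * f k = ∑ j, p j * ∑ k with level k ≤ j, f k := by
  simp_rw [sum_mul, mul_sum]
  exact sum_comm' (by simp)

theorem sum_mul_le_neg_mul_of_recursion [LinearOrder κ] [Field R] [LinearOrder R]
    [IsStrictOrderedRing R] {p S w : κ → R} {i : κ} {α b s : R} (hp : ∀ j, 0 ≤ p j) (hα : α ≠ 0)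
    (hpi : p i = s + b / α * ∑ j with j < i, w j * p j) (hlt : ∀ j < i, S j ≤ w j * b)
    (heq : S i ≤ -α) (hgt : ∀ j, i < j → S j ≤ 0) :
    ∑ j, p j * S j ≤ -(α * s) := by
  have below : ∑ j with j < i, p j * S j ≤ b * ∑ j with j < i, w j * p j := by
    rw [mul_sum]
    refine sum_le_sum fun j hj ↦ ?_
    calc p j * S j ≤ p j * (w j * b) :=
          mul_le_mul_of_nonneg_left (hlt j (mem_filter_univ j |>.mp hj)) (hp j)
      _ = b * (w j * p j) := by ring
  have above : ∑ j with ¬j < i, p j * S j ≤ p i * -α := by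
    rw [← add_sum_erase _ _ (mem_filter_univ i |>.mpr (lt_irrefl i))]
    refine add_le_of_le_of_nonpos (mul_le_mul_of_nonneg_left heq (hp i)) (sum_nonpos fun j hj ↦ ?_)
    simp only [mem_erase, mem_filter_univ, not_lt] at hj
    exact mul_nonpos_of_nonneg_of_nonpos (hp j) (hgt j (hj.2.lt_of_ne' hj.1))
  calc ∑ j, p j * S j
      = ∑ j with j < i, p j * S j + ∑ j with ¬j < i, p j * S j :=
        (sum_filter_add_sum_filter_not _ _ _).symm
    _ ≤ b * ∑ j with j < i, w j * p j + p i * -α := add_le_add below above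
    _ = -(α * s) := by rw [hpi]; field_simp; ring

end WeightedSums

section Level

variable {n l : ℕ}

/-- The row index `k` truncated to the index set `Fin l` of `a`, `σ` and `p`: all rows from
`l - 1` on share the last level. -/
def level (hl : 0 < l) (k : Fin n) : Fin l :=
  ⟨min k (l - 1), by omega⟩

theorem ite_eq_sum_level_le (hl : 0 < l) {M : Type*} [AddCommMonoid M] (p : Fin l → M)
    (k : Fin n) :
    (if (k : ℕ) < l - 1 then ∑ j with (k : ℕ) ≤ (j : Fin l), p j
      else p ⟨l - 1, by omega⟩) = ∑ j with level hl k ≤ j, p j := by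
  split_ifs with hk
  · refine sum_congr (filter_congr fun j _ ↦ ?_) fun _ _ ↦ rfl
    simp only [level, Fin.le_def, min_eq_left hk.le]
  · have last_only : ({j | level hl k ≤ j} : Finset (Fin l)) = {⟨l - 1, by omega⟩} := by
      ext j
      simp only [level, mem_filter_univ, mem_singleton, Fin.le_def, Fin.ext_iff]
      omega
    rw [last_only, sum_singleton]

theorem filter_level_le_eq_Iic (hl : 0 < l) {i : Fin n} {j : Fin l} (hij : (i : ℕ) = j)
    (hj : (j : ℕ) + 1 < l) : ({k | level hl k ≤ j} : Finset (Fin n)) = Iic i := by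
  ext k
  simp only [level, mem_filter_univ, mem_Iic, Fin.le_def]
  omega

end Level

section Columns

variable {n l : ℕ} {F : Matrix (Fin n) (Fin n) ℝ}

theorem IsCompartmental.sum_nonpos_of_mem (hF : IsCompartmental F) {i : Fin n}
    {s : Finset (Fin n)} (hi : i ∈ s) : ∑ k ∈ s, F k i ≤ 0 :=
  calc ∑ k ∈ s, F k i ≤ ∑ k, F k i :=
        sum_le_sum_of_subset_of_nonneg (subset_univ s) fun _ _ hk ↦
          hF.1 _ _ (ne_of_mem_of_not_mem hi hk).symm
    _ ≤ 0 := hF.2 i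

variable {hl : 1 < l} {hln : l ≤ n} {a : Fin l → ℝ} {b : ℝ}

theorem MemCalF.sum_level_le_of_lt (hF : MemCalF hl hln a b F) {i : Fin n} {j : Fin l}
    (hj : j < level hl.pos i) : ∑ k with level hl.pos k ≤ j, F k i ≤ ((j : ℝ) + 1) * b := by
  obtain ⟨hji, _⟩ : (j : ℕ) < i ∧ (j : ℕ) < l - 1 := lt_min_iff.mp hj
  rw [filter_level_le_eq_Iic hl.pos (i := j.castLE hln) rfl (by omega)]
  calc ∑ k ∈ Iic (j.castLE hln), F k i ≤ #(Iic (j.castLE hln)) • b :=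
        sum_le_card_nsmul _ _ _ fun k hk ↦ hF.2.1 k i ((mem_Iic.mp hk).trans_lt hji)
    _ = ((j : ℝ) + 1) * b := by simp

theorem MemCalF.sum_level_le_level (hF : MemCalF hl hln a b F) (i : Fin n) :
    ∑ k with level hl.pos k ≤ level hl.pos i, F k i ≤ -a (level hl.pos i) := by
  obtain ⟨⟨-, hcol⟩, -, hout, hlast⟩ := hF
  rcases lt_or_ge ((i : ℕ) + 1) l with hi | hi
  · have level_i : level hl.pos i = ⟨i, by omega⟩ := Fin.ext (min_eq_left (by omega))
    rw [level_i, filter_level_le_eq_Iic hl.pos (i := i) rfl hi]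
    have split_col : ∑ k ∈ Iic i, F k i + ∑ k with i < k, F k i = ∑ k, F k i := by
      rw [← sum_filter_add_sum_filter_not univ (· ≤ i)]
      simp only [filter_ge_eq_Iic, not_le]
    linarith [hcol i, hout i hi]
  · have level_i : level hl.pos i = ⟨l - 1, by omega⟩ := Fin.ext (min_eq_right (by omega))
    have all_rows : ({k | level hl.pos k ≤ level hl.pos i} : Finset (Fin n)) = univ :=
      filter_true_of_mem fun k _ ↦ level_i ▸ min_le_right (k : ℕ) (l - 1)
    rw [all_rows, level_i]
    exact hlast i (by omega)

end Columns

/-- the explicit construction of `p`, `v` and `λ` from a free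
parameter `σ ∈ (0,∞)^l` yields `v ∈ (0,∞)^n`, `λ > 0` and `vᵀ F ≤ -λ vᵀ` for
every `F ∈ ℱ(a,b,l)`.  (In `0`-based indices: `p_0 = σ_0`, and
`p_i = σ_i + (b/a_i) ∑_{j<i} (j+1) p_j`; `v_i = ∑_{j=i}^{l-1} p_j` for
`i < l - 1` and `v_i = p_{l-1}` otherwise; `λ = min_i (a_i σ_i) / ∑_j p_j`.) -/
theorem stmt1 (n l : ℕ) (hl : 1 < l) (hln : l ≤ n)
    (a : Fin l → ℝ) (ha : ∀ i, 0 < a i) (b : ℝ) (hb : 0 ≤ b)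
    (σ : Fin l → ℝ) (hσ : ∀ i, 0 < σ i)
    (p : Fin l → ℝ)
    (hp : ∀ i : Fin l, p i = σ i + (b / a i) *
      ∑ j ∈ univ.filter (fun j : Fin l => j < i), (((j : ℕ) : ℝ) + 1) * p j)
    (v : Fin n → ℝ)
    (hv : ∀ i : Fin n, v i =
      if (i : ℕ) < l - 1 then
        ∑ j ∈ univ.filter (fun j : Fin l => (i : ℕ) ≤ (j : ℕ)), p j
      else p ⟨l - 1, by omega⟩)
    (lam : ℝ)
    (hlam : lam =
      (univ.inf' ⟨⟨0, by omega⟩, mem_univ _⟩ (fun i : Fin l => a i * σ i)) / ∑ j, p j) :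
    (∀ i, 0 < v i) ∧ 0 < lam ∧
      ∀ F : Matrix (Fin n) (Fin n) ℝ, MemCalF hl hln a b F →
        ∀ i : Fin n, (∑ k, v k * F k i) ≤ -lam * v i := by
  have hp_pos : ∀ j, 0 < p j := pos_of_eq_add_mul_sum_lt hσ (fun i ↦ div_nonneg hb (ha i).le)
    (fun j ↦ by positivity) hp
  have hv_tail (k : Fin n) : v k = ∑ j with level hl.pos k ≤ j, p j :=
    (hv k).trans (ite_eq_sum_level_le hl.pos p k)
  have hp_sum : 0 < ∑ j, p j := sum_pos (fun j _ ↦ hp_pos j) ⟨⟨0, by omega⟩, mem_univ _⟩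
  have haσ (j : Fin l) : 0 < a j * σ j := mul_pos (ha j) (hσ j)
  refine ⟨fun i ↦ ?_, ?_, fun F hF i ↦ ?_⟩
  · rw [hv_tail]
    exact sum_pos (fun j _ ↦ hp_pos j) ⟨level hl.pos i, mem_filter_univ _ |>.mpr le_rfl⟩
  · rw [hlam]
    exact div_pos ((lt_inf'_iff _).mpr fun j _ ↦ haσ j) hp_sum
  · have hlam_le : lam * v i ≤ a (level hl.pos i) * σ (level hl.pos i) := by
      rw [hlam, hv_tail]
      exact inf'_div_mul_le _ (fun j _ ↦ (haσ j).le) hp_sum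
        (sum_le_univ_sum_of_nonneg fun j ↦ (hp_pos j).le) (mem_univ _)
    calc ∑ k, v k * F k i = ∑ j, p j * ∑ k with level hl.pos k ≤ j, F k i := by
          simp_rw [hv_tail, sum_sum_filter_le_mul]
      _ ≤ -(a (level hl.pos i) * σ (level hl.pos i)) :=
          sum_mul_le_neg_mul_of_recursion (fun j ↦ (hp_pos j).le) (ha _).ne' (hp _)
            (fun _ ↦ hF.sum_level_le_of_lt) (hF.sum_level_le_level i)
            fun j hj ↦ hF.1.sum_nonpos_of_mem (mem_filter_univ i |>.mpr hj.le)
      _ ≤ -lam * v i := by linarith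
end

section
/- If a compartmental matrix F ∈ ℝ^{n×n} is outflow connected, then there exists a permutation r of {1,…,n} such that the matrix A defined by A_{ij} = F_{r(i) r(j)} is on outflow canonical form. -/
open Finset

/-- Vertex `i` is an outflow vertex when the `i`-th column sum is negative. -/
def OutflowVertex {n : ℕ} (F : Matrix (Fin n) (Fin n) ℝ) (i : Fin n) : Prop :=
  (∑ k, F k i) < 0

/-- `F` is outflow connected: the set of outflow vertices is nonempty and every
vertex that is not an outflow vertex has a (directed) path to some outflow
vertex, where there is an edge from `u` to `v` when `F v u > 0`. -/
def OutflowConnected {n : ℕ} (F : Matrix (Fin n) (Fin n) ℝ) : Prop :=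
  (∃ i, OutflowVertex F i) ∧
  ∀ i, ¬ OutflowVertex F i → ∃ j, OutflowVertex F j ∧
    Relation.ReflTransGen (fun u v : Fin n => 0 < F v u) i j

/-- `F` is on outflow canonical form: either every column sum is negative, or
there is `l ∈ {2,…,n}` such that the column sums of columns `l,…,n` are negative
(`0`-based: indices `i` with `l - 1 ≤ i`) and for every `i ∈ {1,…,l-1}`
(`0`-based: `i < l - 1`) there is `j > i` with `F j i > 0`. -/
def OutflowCanonical {n : ℕ} (F : Matrix (Fin n) (Fin n) ℝ) : Prop :=
  (∀ i, (∑ k, F k i) < 0) ∨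
  ∃ l : ℕ, 2 ≤ l ∧ l ≤ n ∧
    (∀ i : Fin n, l - 1 ≤ (i : ℕ) → (∑ k, F k i) < 0) ∧
    (∀ i : Fin n, (i : ℕ) < l - 1 → ∃ j : Fin n, i < j ∧ 0 < F j i)

/-!
Order the vertices by decreasing length of a shortest path to the outflow vertices. The outflow
vertices, being those at distance zero, then occupy a final segment, and every other vertex has an
edge to the next vertex of a shortest path, which is strictly closer and so comes later.
-/

section Distance

variable {α ι : Type*} {R : α → α → Prop} {T : Set α} {a b : α}

/-- The points from which some walk of exactly `k` steps of `R` ends in `T`. Their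
indices measure the distance to `T`; a walk may revisit points. -/
def walkPreimage (R : α → α → Prop) (T : Set α) : ℕ → Set α
  | 0 => T
  | k + 1 => {a | ∃ b ∈ walkPreimage R T k, R a b}

/-- The directed distance from `a` to `T`: the least number of steps of `R` leading from `a`
into `T`. It is `0` by convention when `T` cannot be reached from `a`. -/
noncomputable def distTo (R : α → α → Prop) (T : Set α) (a : α) : ℕ :=
  sInf {k | a ∈ walkPreimage R T k}

theorem exists_mem_walkPreimage_of_reflTransGen (hab : Relation.ReflTransGen R a b) (hb : b ∈ T) :
    ∃ k, a ∈ walkPreimage R T k := by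
  induction hab using Relation.ReflTransGen.head_induction_on with
  | refl => exact ⟨0, hb⟩
  | head hac _ ih =>
    obtain ⟨k, hk⟩ := ih
    exact ⟨k + 1, _, hk, hac⟩

theorem mem_walkPreimage_distTo (ha : ∃ k, a ∈ walkPreimage R T k) :
    a ∈ walkPreimage R T (distTo R T a) :=
  Nat.sInf_mem ha

theorem distTo_le {k : ℕ} (ha : a ∈ walkPreimage R T k) : distTo R T a ≤ k :=
  Nat.sInf_le ha

theorem distTo_eq_zero_iff (ha : ∃ k, a ∈ walkPreimage R T k) : distTo R T a = 0 ↔ a ∈ T := by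
  refine ⟨fun h => ?_, fun h => Nat.le_zero.mp (distTo_le h)⟩
  simpa only [h, walkPreimage] using mem_walkPreimage_distTo ha

theorem exists_rel_distTo_lt (ha : ∃ k, a ∈ walkPreimage R T k) (haT : a ∉ T) :
    ∃ b, R a b ∧ distTo R T b < distTo R T a := by
  obtain ⟨k, hk⟩ := Nat.exists_eq_succ_of_ne_zero (mt (distTo_eq_zero_iff ha).mp haT)
  have hmem := mem_walkPreimage_distTo ha
  rw [hk] at hmem ⊢
  obtain ⟨b, hb, hab⟩ := hmem
  exact ⟨b, hab, Nat.lt_succ_of_le (distTo_le hb)⟩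

theorem isUpperSet_preimage_of_antitone_distTo [Preorder ι] {r : ι → α}
    (hr : Antitone (distTo R T ∘ r)) (hT : ∀ i, ∃ k, r i ∈ walkPreimage R T k) :
    IsUpperSet (r ⁻¹' T) := by
  intro i j hij hi
  have hi₀ : distTo R T (r i) = 0 := (distTo_eq_zero_iff (hT i)).mpr hi
  exact (distTo_eq_zero_iff (hT j)).mp (Nat.le_zero.mp ((hr hij).trans_eq hi₀))

theorem exists_gt_rel_of_antitone_distTo [LinearOrder ι] {r : ι → α} (hsurj : r.Surjective)
    (hr : Antitone (distTo R T ∘ r)) {i : ι} (hi : ∃ k, r i ∈ walkPreimage R T k)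
    (hiT : r i ∉ T) : ∃ j, i < j ∧ R (r i) (r j) := by
  obtain ⟨b, hib, hlt⟩ := exists_rel_distTo_lt hi hiT
  obtain ⟨j, rfl⟩ := hsurj b
  exact ⟨j, hr.reflect_lt hlt, hib⟩

end Distance

theorem exists_perm_antitone_comp {n : ℕ} {β : Type*} [LinearOrder β] (f : Fin n → β) :
    ∃ r : Equiv.Perm (Fin n), Antitone (f ∘ r) :=
  ⟨Tuple.sort (OrderDual.toDual ∘ f), Tuple.monotone_sort (OrderDual.toDual ∘ f)⟩

section Outflow

variable {n : ℕ} {F : Matrix (Fin n) (Fin n) ℝ}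

theorem outflowVertex_submatrix_iff (r : Equiv.Perm (Fin n)) (c : Fin n → Fin n) (i : Fin n) :
    OutflowVertex (F.submatrix r c) i ↔ OutflowVertex F (c i) := by
  simp only [OutflowVertex, Matrix.submatrix_apply, Equiv.sum_comp r fun k => F k (c i)]

theorem OutflowConnected.exists_mem_walkPreimage (hF : OutflowConnected F) (i : Fin n) :
    ∃ k, i ∈ walkPreimage (fun u v => 0 < F v u) {j | OutflowVertex F j} k := by
  by_cases hi : OutflowVertex F i
  · exact ⟨0, hi⟩
  · obtain ⟨j, hj, hij⟩ := hF.2 i hi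
    exact exists_mem_walkPreimage_of_reflTransGen hij hj

theorem outflowCanonical_of_isUpperSet (hne : ∃ i, OutflowVertex F i)
    (hup : IsUpperSet {i | OutflowVertex F i})
    (hedge : ∀ i, ¬ OutflowVertex F i → ∃ j, i < j ∧ 0 < F j i) : OutflowCanonical F := by
  obtain ⟨m, hm⟩ := hup.eq_empty_or_Ici.resolve_left (Set.Nonempty.ne_empty hne)
  have hmem : ∀ i, OutflowVertex F i ↔ m ≤ i := Set.ext_iff.mp hm
  by_cases hall : ∀ i, OutflowVertex F i
  · exact Or.inl hall
  obtain ⟨i₀, hi₀⟩ := not_forall.mp hall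
  have hlt : i₀ < m := not_le.mp (mt (hmem i₀).mpr hi₀)
  -- `l` counts vertices from `1` and `m` from `0`.
  refine Or.inr ⟨m + 1, by omega, by omega, fun i hi => (hmem i).mpr hi, fun i hi => ?_⟩
  exact hedge i (mt (hmem i).mp (not_le.mpr hi))

end Outflow

theorem stmt3_general {n : ℕ} {F : Matrix (Fin n) (Fin n) ℝ} (hoc : OutflowConnected F) :
    ∃ r : Equiv.Perm (Fin n), OutflowCanonical (F.submatrix r r) := by
  obtain ⟨r, hr⟩ := exists_perm_antitone_comp
    (distTo (fun u v => 0 < F v u) {i | OutflowVertex F i})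
  have hreach := hoc.exists_mem_walkPreimage
  refine ⟨r, outflowCanonical_of_isUpperSet ?_ ?_ ?_⟩ <;>
    simp only [outflowVertex_submatrix_iff]
  · exact r.surjective.exists.mp hoc.1
  · exact isUpperSet_preimage_of_antitone_distTo hr fun i => hreach (r i)
  · exact fun i => exists_gt_rel_of_antitone_distTo r.surjective hr (hreach (r i))

/-- every outflow connected compartmental matrix can be permuted
to a matrix on outflow canonical form. -/
theorem stmt3 (n : ℕ) (F : Matrix (Fin n) (Fin n) ℝ) (hF : IsCompartmental F)
    (hoc : OutflowConnected F) :
    ∃ r : Equiv.Perm (Fin n),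
      OutflowCanonical (Matrix.of fun i j => F (r i) (r j)) :=
  stmt3_general hoc
end

section
/- If a compartmental matrix F ∈ ℝ^{n×n} is not outflow connected, then F contains a trap, i.e. there exists a nonempty K ⊆ {1,…,n} such that ∑_{k=1}^n F_{ki} = 0 for all i ∈ K and F_{ij} = 0 for all j ∈ K and i ∉ K. -/
open Finset

section Relation

variable {V : Type*} {r : V → V → Prop} {T : Set V}

/-- Connectedness to a target set `T` of the directed graph with edge relation `r`: `T` is nonempty
and every vertex outside `T` has a path into `T`. Outflow connectedness is the case where `T` is the
set of outflow vertices. -/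
def IsConnectedTo (r : V → V → Prop) (T : Set V) : Prop :=
  T.Nonempty ∧ ∀ i ∉ T, ∃ j ∈ T, Relation.ReflTransGen r i j

theorem exists_forall_reachable_notMem_of_not_isConnectedTo [Nonempty V]
    (h : ¬ IsConnectedTo r T) : ∃ v, ∀ w, Relation.ReflTransGen r v w → w ∉ T := by
  by_contra! hreach
  have hT : T.Nonempty := by
    obtain ⟨w, -, hw⟩ := hreach (Classical.arbitrary V)
    exact ⟨w, hw⟩
  refine h ⟨hT, fun i _ => ?_⟩
  obtain ⟨w, hiw, hw⟩ := hreach i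
  exact ⟨w, hw, hiw⟩

end Relation

section Matrix

variable {V R : Type*} [PartialOrder R]

/-- The edge relation of the directed graph of a matrix. An edge `u → v` is a positive entry in
column `u` and row `v`. -/
def HasEdge [Zero R] (F : Matrix V V R) (u v : V) : Prop :=
  0 < F v u

/-- The set of outflow vertices of a matrix, those whose column sum is negative. -/
def outflowSet [Fintype V] [AddCommMonoid R] (F : Matrix V V R) : Set V :=
  {i | ∑ k, F k i < 0}

/-- A trap of a matrix: a nonempty set of vertices whose column sums vanish and which no edge
leaves. As in a compartmental matrix, the absence of an edge is expressed by a zero entry. -/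
structure IsTrap_s4 [Fintype V] [AddCommMonoid R] (F : Matrix V V R) (K : Finset V) : Prop where
  nonempty : K.Nonempty
  sum_col_eq_zero : ∀ i ∈ K, ∑ k, F k i = 0
  apply_eq_zero : ∀ j ∈ K, ∀ i ∉ K, F i j = 0

open Classical in
/-- The set of vertices reachable from `v`, including `v`, in the directed graph of a matrix. -/
noncomputable def reachableFinset [Fintype V] [Zero R] (F : Matrix V V R) (v : V) : Finset V :=
  {w | Relation.ReflTransGen (HasEdge F) v w}

theorem mem_reachableFinset [Fintype V] [Zero R] {F : Matrix V V R} {v w : V} :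
    w ∈ reachableFinset F v ↔ Relation.ReflTransGen (HasEdge F) v w := by
  simp [reachableFinset]

theorem apply_eq_zero_of_notMem_reachableFinset [Fintype V] [Zero R] {F : Matrix V V R}
    (hF : ∀ i j, i ≠ j → 0 ≤ F i j) {v i j : V} (hj : j ∈ reachableFinset F v)
    (hi : i ∉ reachableFinset F v) : F i j = 0 := by
  have hij : i ≠ j := by
    rintro rfl
    exact hi hj
  have hedge : ¬ HasEdge F j i := fun h =>
    hi (mem_reachableFinset.2 ((mem_reachableFinset.1 hj).tail h))
  exact (eq_of_le_of_not_lt (hF i j hij) hedge).symm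

theorem isTrap_reachableFinset [Fintype V] [AddCommMonoid R] {F : Matrix V V R}
    (hF : ∀ i j, i ≠ j → 0 ≤ F i j) (hsum : ∀ i, ∑ k, F k i ≤ 0) {v : V}
    (hv : ∀ w, Relation.ReflTransGen (HasEdge F) v w → w ∉ outflowSet F) :
    IsTrap_s4 F (reachableFinset F v) where
  nonempty := ⟨v, mem_reachableFinset.2 .refl⟩
  sum_col_eq_zero i hi := eq_of_le_of_not_lt (hsum i) (hv i (mem_reachableFinset.1 hi))
  apply_eq_zero _ hj _ hi := apply_eq_zero_of_notMem_reachableFinset hF hj hi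

theorem stmt4_general [Fintype V] [Nonempty V] [AddCommMonoid R] (F : Matrix V V R)
    (hF : ∀ i j, i ≠ j → 0 ≤ F i j) (hsum : ∀ i, ∑ k, F k i ≤ 0)
    (h : ¬ IsConnectedTo (HasEdge F) (outflowSet F)) : ∃ K : Finset V, IsTrap_s4 F K := by
  obtain ⟨v, hv⟩ := exists_forall_reachable_notMem_of_not_isConnectedTo h
  exact ⟨reachableFinset F v, isTrap_reachableFinset hF hsum hv⟩

end Matrix

/-- a compartmental matrix which is not outflow connected contains
a trap: a nonempty set `K` of vertices whose column sums vanish and with no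
edge from `K` to its complement. -/
theorem stmt4 (n : ℕ) (hn : 0 < n) (F : Matrix (Fin n) (Fin n) ℝ)
    (hF : IsCompartmental F) (h : ¬ OutflowConnected F) :
    ∃ K : Finset (Fin n), K.Nonempty ∧
      (∀ i ∈ K, (∑ k, F k i) = 0) ∧
      (∀ j ∈ K, ∀ i ∉ K, F i j = 0) := by
  have : Nonempty (Fin n) := ⟨⟨0, hn⟩⟩
  obtain ⟨K, hK⟩ := stmt4_general F hF.1 hF.2 h
  exact ⟨K, hK.nonempty, hK.sum_col_eq_zero, hK.apply_eq_zero⟩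
end

section
/- Let F ∈ ℝ^{n×n} be a compartmental matrix and K a trap of F. If K ≠ {1,…,n}, then for every x ∈ [0,∞)^n, ∑_{j∈K} (Fx)_j = ∑_{j∈K} ∑_{i∉K} F_{ji} x_i ≥ 0. Moreover, for any trap K of F, every differentiable q : [0,∞) → [0,∞)^n satisfying q′(t) = F q(t) for all t ≥ 0 satisfies ∑_{i∈K} q_i(t) ≥ ∑_{i∈K} q_i(0) for all t ≥ 0. -/
open Finset

/-- A nonempty set `K` of vertices is a trap of `F` if no element of `K` is an
outflow vertex (the column sums over `K` vanish) and there is no edge from `K`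
to its complement (`F i j = 0` for `j ∈ K`, `i ∉ K`). -/
def IsTrap {n : ℕ} (F : Matrix (Fin n) (Fin n) ℝ) (K : Finset (Fin n)) : Prop :=
  K.Nonempty ∧ (∀ i ∈ K, (∑ k, F k i) = 0) ∧ ∀ j ∈ K, ∀ i ∉ K, F i j = 0

/- The columns indexed by a trap `K` sum to zero already within `K`, so mass circulating inside `K`
cancels from `∑ j ∈ K, (F x) j`. What remains is the inflow from the complement of `K`, whose
coefficients are off-diagonal and therefore nonnegative. Along a nonnegative solution of `q' = F q`
this inflow is the derivative of the mass in `K`. -/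

section MulVec

open scoped Matrix

variable {m n R : Type*} [Fintype n] [NonUnitalNonAssocSemiring R]
  {A : Matrix m n R} {s : Finset m} {t : Finset n}

theorem sum_mulVec_eq_sum_sum_compl [DecidableEq n] (hA : ∀ i ∈ t, ∑ j ∈ s, A j i = 0)
    (x : n → R) :
    ∑ j ∈ s, (A *ᵥ x) j = ∑ j ∈ s, ∑ i ∈ tᶜ, A j i * x i := by
  have inner_sum : ∑ j ∈ s, ∑ i ∈ t, A j i * x i = 0 := by
    rw [sum_comm]
    refine sum_eq_zero fun i hi => ?_
    rw [← sum_mul, hA i hi, zero_mul]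
  calc ∑ j ∈ s, (A *ᵥ x) j
      = ∑ j ∈ s, (∑ i ∈ t, A j i * x i + ∑ i ∈ tᶜ, A j i * x i) :=
        sum_congr rfl fun j _ => (sum_add_sum_compl t fun i => A j i * x i).symm
    _ = ∑ j ∈ s, ∑ i ∈ tᶜ, A j i * x i := by rw [sum_add_distrib, inner_sum, zero_add]

theorem sum_mulVec_nonneg [PartialOrder R] [IsOrderedAddMonoid R] [PosMulMono R]
    (hA : ∀ i ∈ t, ∑ j ∈ s, A j i = 0) (hA_nonneg : ∀ j ∈ s, ∀ i ∉ t, 0 ≤ A j i)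
    {x : n → R} (hx : ∀ i ∉ t, 0 ≤ x i) : 0 ≤ ∑ j ∈ s, (A *ᵥ x) j := by
  classical
  rw [sum_mulVec_eq_sum_sum_compl hA]
  refine sum_nonneg fun j hj => sum_nonneg fun i hi => ?_
  rw [mem_compl] at hi
  exact mul_nonneg (hA_nonneg j hj i hi) (hx i hi)

end MulVec

theorem monotoneOn_sum_of_hasDerivWithinAt_nonneg {ι : Type*} {s : Finset ι} {D : Set ℝ}
    (hD : Convex ℝ D) {f f' : ι → ℝ → ℝ}
    (hf : ∀ i ∈ s, ∀ t ∈ D, HasDerivWithinAt (f i) (f' i t) D t)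
    (hf' : ∀ t ∈ D, 0 ≤ ∑ i ∈ s, f' i t) :
    MonotoneOn (fun t => ∑ i ∈ s, f i t) D := by
  have hsum : ∀ t ∈ D, HasDerivWithinAt (fun t => ∑ i ∈ s, f i t) (∑ i ∈ s, f' i t) D t :=
    fun t ht => HasDerivWithinAt.fun_sum fun i hi => hf i hi t ht
  exact monotoneOn_of_hasDerivWithinAt_nonneg hD
    (fun t ht => (hsum t ht).continuousWithinAt)
    (fun t ht => (hsum t (interior_subset ht)).mono interior_subset)
    (fun t ht => hf' t (interior_subset ht))

theorem IsTrap.sum_col_eq_zero {n : ℕ} {F : Matrix (Fin n) (Fin n) ℝ} {K : Finset (Fin n)}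
    (hK : IsTrap F K) {i : Fin n} (hi : i ∈ K) : ∑ j ∈ K, F j i = 0 :=
  (sum_subset K.subset_univ fun j _ hj => hK.2.2 i hi j hj).trans (hK.2.1 i hi)

theorem IsCompartmental.nonneg_of_mem_of_notMem {n : ℕ} {F : Matrix (Fin n) (Fin n) ℝ}
    (hF : IsCompartmental F) {K : Finset (Fin n)} {i j : Fin n} (hj : j ∈ K) (hi : i ∉ K) :
    0 ≤ F j i :=
  hF.1 j i (ne_of_mem_of_not_mem hj hi)

theorem stmt5_general {ι : Type*} [Fintype ι] [DecidableEq ι] {F : Matrix ι ι ℝ} {K : Finset ι}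
    (hcol : ∀ i ∈ K, ∑ j ∈ K, F j i = 0) (hinflow : ∀ j ∈ K, ∀ i ∉ K, 0 ≤ F j i) :
    (∀ x : ι → ℝ, ∑ j ∈ K, F.mulVec x j = ∑ j ∈ K, ∑ i ∈ Kᶜ, F j i * x i) ∧
    (∀ x : ι → ℝ, (∀ i ∉ K, 0 ≤ x i) → 0 ≤ ∑ j ∈ K, F.mulVec x j) ∧
    ∀ D : Set ℝ, Convex ℝ D → ∀ q : ℝ → ι → ℝ,
      (∀ t ∈ D, (∀ i ∉ K, 0 ≤ q t i) ∧ HasDerivWithinAt q (F.mulVec (q t)) D t) →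
      MonotoneOn (fun t => ∑ i ∈ K, q t i) D :=
  ⟨sum_mulVec_eq_sum_sum_compl hcol,
    fun _ hx => sum_mulVec_nonneg hcol hinflow hx,
    fun _ hD _ hq => monotoneOn_sum_of_hasDerivWithinAt_nonneg hD
      (fun i _ t ht => hasDerivWithinAt_pi.1 (hq t ht).2 i)
      fun t ht => sum_mulVec_nonneg hcol hinflow (hq t ht).1⟩

/-- if `K` is a trap of the compartmental matrix `F` and
`K ≠ {1,…,n}`, then for every `x ∈ [0,∞)^n`,
`∑_{j∈K} (Fx)_j = ∑_{j∈K} ∑_{i∉K} F_{ji} x_i ≥ 0`; moreover, for any trap `K`,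
every nonnegative solution of `q' = F q` on `[0,∞)` satisfies
`∑_{i∈K} q_i(t) ≥ ∑_{i∈K} q_i(0)` for all `t ≥ 0`. -/
theorem stmt5 (n : ℕ) (hn : 0 < n) (F : Matrix (Fin n) (Fin n) ℝ)
    (hF : IsCompartmental F) (K : Finset (Fin n)) (hK : IsTrap F K) :
    (K ≠ univ → ∀ x : Fin n → ℝ, (∀ i, 0 ≤ x i) →
      (∑ j ∈ K, F.mulVec x j = ∑ j ∈ K, ∑ i ∈ Kᶜ, F j i * x i) ∧
      0 ≤ ∑ j ∈ K, F.mulVec x j) ∧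
    ∀ q : ℝ → Fin n → ℝ,
      (∀ t ∈ Set.Ici (0 : ℝ), (∀ i, 0 ≤ q t i) ∧ HasDerivAt q (F.mulVec (q t)) t) →
      ∀ t ∈ Set.Ici (0 : ℝ), ∑ i ∈ K, q 0 i ≤ ∑ i ∈ K, q t i := by
  obtain ⟨hsum, hnonneg, hmono⟩ := stmt5_general (fun _ => hK.sum_col_eq_zero)
    fun _ hj _ => hF.nonneg_of_mem_of_notMem hj
  exact ⟨fun _ x hx => ⟨hsum x, hnonneg x fun i _ => hx i⟩, fun q hq t ht =>
    hmono _ (convex_Ici 0) q (fun s hs => ⟨fun i _ => (hq s hs).1 i, (hq s hs).2.hasDerivWithinAt⟩)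
      Set.self_mem_Ici ht ht⟩
end

section
/- Let 𝒳 ⊆ [0,∞)^n, let f : [0,∞) × ℝ^n → ℝ^n, and suppose there exist a vector v ∈ (0,∞)^n and a constant λ > 0 such that ⟨v, f(t,x)⟩ ≤ −λ⟨v, x⟩ for all t ≥ 0 and all x ∈ [0,∞)^n. Then every differentiable function x : [0,∞) → 𝒳 with x′(t) = f(t, x(t)) for all t ≥ 0 satisfies |x(t)|₁ ≤ γ e^{−λ t} |x(0)|₁ for all t ≥ 0, where γ = (max_i v_i)/(min_i v_i). -/
open Finset

/-- The `1`-norm `|x|₁ = ∑ i, |x i|` on `ℝⁿ`. -/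
def onenorm {n : ℕ} (x : Fin n → ℝ) : ℝ := ∑ i, |x i|

/-! The weighted sum `V(x) = ⟨v, x⟩` is a linear Lyapunov function: along a solution `V' ≤ -λ V`, so
`V` decays like `e^{-λ t}` by Grönwall's inequality. On the nonnegative orthant `V` is comparable to
the `1`-norm, `(min v) |x|₁ ≤ V(x) ≤ (max v) |x|₁`, which costs the factor `γ = max v / min v`. -/

open Set (Icc Ico Ici)
open scoped Matrix

theorem le_mul_exp_of_deriv_right_le {u u' : ℝ → ℝ} {K a b : ℝ} (hu : ContinuousOn u (Icc a b))
    (hu' : ∀ t ∈ Ico a b, HasDerivWithinAt u (u' t) (Ici t) t)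
    (bound : ∀ t ∈ Ico a b, u' t ≤ K * u t) :
    ∀ t ∈ Icc a b, u t ≤ u a * Real.exp (K * (t - a)) := by
  intro t ht
  rw [← gronwallBound_ε0]
  exact le_gronwallBound_of_liminf_deriv_right_le hu
    (fun s hs _ hr ↦ (hu' s hs).liminf_right_slope_le hr) le_rfl
    (fun s hs ↦ by simpa only [add_zero] using bound s hs) t ht

section Weights

variable {ι : Type*} [Fintype ι]

theorem hasDerivWithinAt_const_dotProduct {𝕜 : Type*} [NontriviallyNormedField 𝕜] (v : ι → 𝕜)
    {x : 𝕜 → ι → 𝕜} {x' : ι → 𝕜} {s : Set 𝕜} {t : 𝕜} (hx : HasDerivWithinAt x x' s t) :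
    HasDerivWithinAt (fun τ ↦ v ⬝ᵥ x τ) (v ⬝ᵥ x') s t :=
  HasDerivWithinAt.fun_sum fun i _ ↦ (hasDerivWithinAt_pi.1 hx i).const_mul (v i)

theorem dotProduct_le_mul_exp_of_deriv_right_le {v : ι → ℝ} {x x' : ℝ → ι → ℝ} {K a b : ℝ}
    (hx : ContinuousOn x (Icc a b))
    (hx' : ∀ t ∈ Ico a b, HasDerivWithinAt x (x' t) (Ici t) t)
    (bound : ∀ t ∈ Ico a b, v ⬝ᵥ x' t ≤ K * (v ⬝ᵥ x t)) :
    ∀ t ∈ Icc a b, v ⬝ᵥ x t ≤ v ⬝ᵥ x a * Real.exp (K * (t - a)) :=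
  le_mul_exp_of_deriv_right_le ((continuous_const.dotProduct continuous_id).comp_continuousOn hx)
    (fun t ht ↦ hasDerivWithinAt_const_dotProduct v (hx' t ht)) bound

variable {R : Type*} [Ring R] [LinearOrder R] [IsOrderedRing R] {v y : ι → R}

theorem mul_sum_abs_le_dotProduct {m : R} (hv : ∀ i, m ≤ v i) (hy : 0 ≤ y) :
    m * ∑ i, |y i| ≤ v ⬝ᵥ y := by
  rw [mul_sum]
  refine sum_le_sum fun i _ ↦ ?_
  rw [abs_of_nonneg (hy i)]
  exact mul_le_mul_of_nonneg_right (hv i) (hy i)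

theorem dotProduct_le_mul_sum_abs {M : R} (hv : ∀ i, |v i| ≤ M) :
    v ⬝ᵥ y ≤ M * ∑ i, |y i| := by
  rw [mul_sum]
  refine sum_le_sum fun i _ ↦ ?_
  calc v i * y i ≤ |v i| * |y i| := (le_abs_self _).trans_eq (abs_mul _ _)
    _ ≤ M * |y i| := mul_le_mul_of_nonneg_right (hv i) (abs_nonneg _)

end Weights

theorem stmt6_general {ι : Type*} [Fintype ι] [Nonempty ι] {v : ι → ℝ} (hv : ∀ i, 0 < v i)
    {lam a b : ℝ} (hab : a ≤ b) {x x' : ℝ → ι → ℝ} (hx : ContinuousOn x (Icc a b))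
    (hx' : ∀ t ∈ Ico a b, HasDerivWithinAt x (x' t) (Ici t) t)
    (bound : ∀ t ∈ Ico a b, v ⬝ᵥ x' t ≤ -lam * (v ⬝ᵥ x t)) (hxb : 0 ≤ x b) :
    ∑ i, |x b i| ≤ univ.sup' univ_nonempty v / univ.inf' univ_nonempty v *
      Real.exp (-lam * (b - a)) * ∑ i, |x a i| := by
  set M := univ.sup' univ_nonempty v
  set m := univ.inf' univ_nonempty v
  have m_pos : 0 < m := (lt_inf'_iff _).2 fun i _ ↦ hv i
  have abs_v_le (i : ι) : |v i| ≤ M := (abs_of_pos (hv i)).trans_le (le_sup' v (mem_univ i))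
  have weighted : m * ∑ i, |x b i| ≤ M * (∑ i, |x a i|) * Real.exp (-lam * (b - a)) :=
    calc m * ∑ i, |x b i| ≤ v ⬝ᵥ x b :=
          mul_sum_abs_le_dotProduct (fun i ↦ inf'_le v (mem_univ i)) hxb
      _ ≤ v ⬝ᵥ x a * Real.exp (-lam * (b - a)) :=
          dotProduct_le_mul_exp_of_deriv_right_le hx hx' bound b (Set.right_mem_Icc.2 hab)
      _ ≤ M * (∑ i, |x a i|) * Real.exp (-lam * (b - a)) := by
          gcongr
          exact dotProduct_le_mul_sum_abs abs_v_le
  calc ∑ i, |x b i| ≤ M * (∑ i, |x a i|) * Real.exp (-lam * (b - a)) / m :=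
        (le_div_iff₀' m_pos).2 weighted
    _ = M / m * Real.exp (-lam * (b - a)) * ∑ i, |x a i| := by ring

/-- if `⟨v, f(t,x)⟩ ≤ -λ ⟨v, x⟩` on `[0,∞) × [0,∞)^n` for some
`v ∈ (0,∞)^n` and `λ > 0`, then every solution of `x' = f(t,x)` staying in
`𝒳 ⊆ [0,∞)^n` satisfies `|x(t)|₁ ≤ γ e^{-λ t} |x(0)|₁` with
`γ = (max_i v_i)/(min_i v_i)`. -/
theorem stmt6 (n : ℕ) (hn : 0 < n) (X : Set (Fin n → ℝ))
    (hX : X ⊆ {x : Fin n → ℝ | ∀ i, 0 ≤ x i})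
    (f : ℝ → (Fin n → ℝ) → (Fin n → ℝ))
    (v : Fin n → ℝ) (hv : ∀ i, 0 < v i) (lam : ℝ) (hlam : 0 < lam)
    (hvf : ∀ t ≥ (0 : ℝ), ∀ x : Fin n → ℝ, (∀ i, 0 ≤ x i) →
      (∑ i, v i * f t x i) ≤ -lam * ∑ i, v i * x i)
    (x : ℝ → Fin n → ℝ)
    (hx : ∀ t ≥ (0 : ℝ), x t ∈ X ∧ HasDerivAt x (f t (x t)) t) :
    ∀ t ≥ (0 : ℝ), onenorm (x t) ≤
      ((univ.sup' ⟨⟨0, hn⟩, mem_univ _⟩ v) / (univ.inf' ⟨⟨0, hn⟩, mem_univ _⟩ v)) *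
        Real.exp (-lam * t) * onenorm (x 0) := by
  intro t ht
  have : Nonempty (Fin n) := ⟨⟨0, hn⟩⟩
  simpa only [onenorm, sub_zero] using stmt6_general hv ht
    (fun s hs ↦ (hx s hs.1).2.continuousAt.continuousWithinAt)
    (fun s hs ↦ (hx s hs.1).2.hasDerivWithinAt)
    (fun s hs ↦ hvf s hs.1 (x s) (hX (hx s hs.1).1)) (hX (hx t ht).1)
end

section
/- Let 𝒳 = 𝒳₁ × ⋯ × 𝒳ₙ ⊆ ℝⁿ be a product of n intervals (a box). Let f : [0,∞) × 𝒳 → ℝⁿ be continuous, Lipschitz continuous in its second argument uniformly in the first on compact sets, and such that x ↦ f(t,x) is type K on 𝒳 for each t ≥ 0. Fix 0 ≤ t₀ < t₁ and let x, y : [t₀,t₁] → 𝒳 be differentiable with x′(t) = f(t, x(t)) and y′(t) = f(t, y(t)) for all t ∈ [t₀,t₁]. If x(t₀) ≤ y(t₀) componentwise, then x(t) ≤ y(t) componentwise for all t ∈ [t₀,t₁]. -/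
open Finset

/-- A map `h` is type K on `D ⊆ ℝⁿ` if `h_i a ≤ h_i b` whenever `a, b ∈ D`
satisfy `a ≤ b` componentwise and `a_i = b_i`. -/
def IsTypeKOn {n : ℕ} (h : (Fin n → ℝ) → (Fin n → ℝ)) (D : Set (Fin n → ℝ)) : Prop :=
  ∀ a ∈ D, ∀ b ∈ D, a ≤ b → ∀ i, a i = b i → h a i ≤ h b i

/-
Let `m t` be the sup norm of `(x t - y t)⁺`, so that `x ⊔ y - y` has norm `m`. A coordinate `i` in
which `x i - y i` attains the value `m ≥ 0` satisfies `x i = (x ⊔ y) i`, and `x ≤ x ⊔ y`, hence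
`x' i - y' i ≤ f i x - f i y ≤ f i (x ⊔ y) - f i y ≤ L * m` by quasimonotonicity and the Lipschitz
bound on the compact set swept out by `y` and `x ⊔ y`. Only these extremal coordinates influence the
right Dini derivative of `m`, so `m' ≤ L * m`, and Grönwall's inequality propagates `m t₀ = 0`.
-/

section

open Set Filter Topology

variable {ι : Type*}

instance instContinuousSupPi {α : ι → Type*} [∀ i, Max (α i)] [∀ i, TopologicalSpace (α i)]
    [∀ i, ContinuousSup (α i)] : ContinuousSup (∀ i, α i) where
  continuous_sup := continuous_pi fun i =>
    ((continuous_apply i).comp continuous_fst).sup ((continuous_apply i).comp continuous_snd)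

/-- Quasimonotonicity (the type K condition, also called cooperativity) on `D` of a vector field on
`ℝ^ι`: it is `IsTypeKOn` for an arbitrary index type, and unfolds to it when `ι = Fin n`. -/
def QuasimonotoneOn (h : (ι → ℝ) → ι → ℝ) (D : Set (ι → ℝ)) : Prop :=
  ∀ a ∈ D, ∀ b ∈ D, a ≤ b → ∀ i, a i = b i → h a i ≤ h b i

theorem hasDerivWithinAt_Ici_of_Icc {E : Type*} [NormedAddCommGroup E] [NormedSpace ℝ E]
    {z : ℝ → E} {z' : E} {a b t : ℝ} (ht : t ∈ Ico a b) (hz : HasDerivWithinAt z z' (Icc a b) t) :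
    HasDerivWithinAt z z' (Ici t) t :=
  hz.mono_of_mem_nhdsWithin (Icc_mem_nhdsGE_of_mem ht)

theorem eventually_lt_add_mul_sub_of_le {w : ℝ → ℝ} {w' t m r : ℝ}
    (hw : HasDerivWithinAt w w' (Ici t) t) (hm : w t ≤ m) (hr : w t = m → w' < r) :
    ∀ᶠ z in 𝓝[>] t, w z < m + r * (z - t) := by
  rcases hm.lt_or_eq with hlt | heq
  · have hcont : ContinuousWithinAt (fun z => m + r * (z - t)) (Ioi t) t := by fun_prop
    exact (hw.continuousWithinAt.mono Ioi_subset_Ici_self).eventually_lt hcont (by simpa using hlt)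
  · filter_upwards [hw.Ioi_of_Ici.limsup_slope_le' self_notMem_Ioi (hr heq), self_mem_nhdsWithin]
      with z hz hzt
    rw [slope_def_field, div_lt_iff₀ (sub_pos.2 hzt), heq] at hz
    linarith

theorem exists_forall_norm_sub_le_mul_of_isCompact {τ E F : Type*} [TopologicalSpace τ]
    [SeminormedAddCommGroup E] [SeminormedAddCommGroup F] {f : τ → E → F} {S : Set τ} {D : Set E}
    {p q : τ → E} (hS : IsCompact S)
    (hlip : ∀ K ⊆ D, IsCompact K → ∃ L : ℝ, ∀ t ∈ S, ∀ a ∈ K, ∀ b ∈ K,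
      ‖f t a - f t b‖ ≤ L * ‖a - b‖)
    (hp : ContinuousOn p S) (hq : ContinuousOn q S) (hpD : MapsTo p S D) (hqD : MapsTo q S D) :
    ∃ L : ℝ, ∀ t ∈ S, ‖f t (p t) - f t (q t)‖ ≤ L * ‖p t - q t‖ := by
  obtain ⟨L, hL⟩ := hlip (p '' S ∪ q '' S) (union_subset hpD.image_subset hqD.image_subset)
    ((hS.image_of_continuousOn hp).union (hS.image_of_continuousOn hq))
  exact ⟨L, fun t ht =>
    hL t ht _ (.inl (mem_image_of_mem p ht)) _ (.inr (mem_image_of_mem q ht))⟩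

section Fintype

variable [Fintype ι]

theorem norm_posPart_lt_iff {a : ι → ℝ} {c : ℝ} (hc : 0 < c) : ‖a⁺‖ < c ↔ ∀ i, a i < c := by
  simp only [pi_norm_lt_iff hc, Pi.posPart_apply, Real.norm_of_nonneg (posPart_nonneg _),
    posPart_lt, hc, and_true]

theorem apply_le_norm_posPart (a : ι → ℝ) (i : ι) : a i ≤ ‖a⁺‖ :=
  (le_posPart (a i)).trans ((le_abs_self _).trans (norm_le_pi_norm a⁺ i))

theorem eventually_slope_norm_posPart_lt {u : ℝ → ι → ℝ} {u' : ι → ℝ} {t r : ℝ}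
    (hu : HasDerivWithinAt u u' (Ici t) t) (hzero : ‖(u t)⁺‖ = 0 → 0 < r)
    (hmax : ∀ i, u t i = ‖(u t)⁺‖ → u' i < r) :
    ∀ᶠ z in 𝓝[>] t, slope (fun s => ‖(u s)⁺‖) t z < r := by
  have hcoord : ∀ᶠ z in 𝓝[>] t, ∀ i, u z i < ‖(u t)⁺‖ + r * (z - t) :=
    eventually_all.2 fun i => eventually_lt_add_mul_sub_of_le (hasDerivWithinAt_pi.1 hu i)
      (apply_le_norm_posPart _ i) (hmax i)
  have hpos : ∀ᶠ z in 𝓝[>] t, 0 < ‖(u t)⁺‖ + r * (z - t) :=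
    eventually_lt_add_mul_sub_of_le (hasDerivWithinAt_const t _ (0 : ℝ)) (norm_nonneg _)
      (hzero ∘ Eq.symm)
  filter_upwards [hcoord, hpos, self_mem_nhdsWithin] with z hz hz0 hzt
  rw [slope_def_field, div_lt_iff₀ (sub_pos.2 hzt), sub_lt_iff_lt_add']
  exact (norm_posPart_lt_iff hz0).2 hz

theorem nonpos_of_deriv_right_le_mul_norm_posPart {u u' : ℝ → ι → ℝ} {a b K : ℝ}
    (hu : ContinuousOn u (Icc a b)) (hu' : ∀ t ∈ Ico a b, HasDerivWithinAt u (u' t) (Ici t) t)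
    (ha : u a ≤ 0) (bound : ∀ t ∈ Ico a b, ∀ i, u t i = ‖(u t)⁺‖ → u' t i ≤ K * ‖(u t)⁺‖) :
    ∀ t ∈ Icc a b, u t ≤ 0 := by
  intro t ht
  have hcont : ContinuousOn (fun s => ‖(u s)⁺‖) (Icc a b) := (hu.sup continuousOn_const).norm
  have hslope : ∀ s ∈ Ico a b, ∀ r, K * ‖(u s)⁺‖ < r →
      ∃ᶠ z in 𝓝[>] s, (z - s)⁻¹ * (‖(u z)⁺‖ - ‖(u s)⁺‖) < r := fun s hs r hr =>
    (eventually_slope_norm_posPart_lt (hu' s hs)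
      (fun hzero => by simpa only [hzero, mul_zero] using hr)
      (fun i hi => (bound s hs i hi).trans_lt hr)).frequently
  have hinit : ‖(u a)⁺‖ ≤ 0 := by rw [posPart_eq_zero.2 ha, norm_zero]
  have hgronwall : ‖(u t)⁺‖ ≤ gronwallBound 0 K 0 (t - a) :=
    le_gronwallBound_of_liminf_deriv_right_le hcont hslope hinit (fun _ _ => (add_zero _).ge) t ht
  rw [gronwallBound_ε0_δ0, norm_le_zero_iff] at hgronwall
  exact posPart_eq_zero.1 hgronwall

theorem QuasimonotoneOn.apply_sub_apply_le {h : (ι → ℝ) → ι → ℝ} {D : Set (ι → ℝ)} {L : ℝ}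
    {a b : ι → ℝ} {i : ι} (hh : QuasimonotoneOn h D) (ha : a ∈ D) (hab : a ⊔ b ∈ D)
    (hi : b i ≤ a i) (hL : ‖h (a ⊔ b) - h b‖ ≤ L * ‖a ⊔ b - b‖) :
    h a i - h b i ≤ L * ‖(a - b)⁺‖ := by
  have hsub : a ⊔ b - b = (a - b)⁺ := by rw [sup_eq_add_posPart_sub, add_sub_cancel_left]
  calc h a i - h b i
      ≤ h (a ⊔ b) i - h b i :=
        sub_le_sub_right (hh a ha _ hab le_sup_left i (sup_eq_left.2 hi).symm) _
    _ ≤ ‖h (a ⊔ b) - h b‖ := (le_abs_self _).trans (norm_le_pi_norm (h (a ⊔ b) - h b) i)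
    _ ≤ L * ‖(a - b)⁺‖ := hsub ▸ hL

theorem stmt8_general {D : Set (ι → ℝ)} (hD : SupClosed D) {f : ℝ → (ι → ℝ) → ι → ℝ} {t₀ t₁ : ℝ}
    (hlip : ∀ K ⊆ D, IsCompact K → ∃ L : ℝ, ∀ t ∈ Icc t₀ t₁, ∀ a ∈ K, ∀ b ∈ K,
      ‖f t a - f t b‖ ≤ L * ‖a - b‖)
    (hf : ∀ t ∈ Ico t₀ t₁, QuasimonotoneOn (f t) D) {x y x' y' : ℝ → ι → ℝ}
    (hxD : ∀ t ∈ Icc t₀ t₁, x t ∈ D) (hyD : ∀ t ∈ Icc t₀ t₁, y t ∈ D)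
    (hx : ContinuousOn x (Icc t₀ t₁)) (hy : ContinuousOn y (Icc t₀ t₁))
    (hx' : ∀ t ∈ Ico t₀ t₁, HasDerivWithinAt x (x' t) (Ici t) t)
    (hy' : ∀ t ∈ Ico t₀ t₁, HasDerivWithinAt y (y' t) (Ici t) t)
    (hxf : ∀ t ∈ Ico t₀ t₁, x' t ≤ f t (x t)) (hyf : ∀ t ∈ Ico t₀ t₁, f t (y t) ≤ y' t)
    (h0 : x t₀ ≤ y t₀) :
    ∀ t ∈ Icc t₀ t₁, x t ≤ y t := by
  have hsupD : ∀ t ∈ Icc t₀ t₁, x t ⊔ y t ∈ D := fun t ht => hD (hxD t ht) (hyD t ht)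
  obtain ⟨L, hL⟩ :=
    exists_forall_norm_sub_le_mul_of_isCompact isCompact_Icc hlip (hx.sup hy) hy hsupD hyD
  have hextremal : ∀ t ∈ Ico t₀ t₁, ∀ i, (x t - y t) i = ‖(x t - y t)⁺‖ →
      (x' t - y' t) i ≤ L * ‖(x t - y t)⁺‖ := by
    intro t ht i hi
    have htc := Ico_subset_Icc_self ht
    have hyx : y t i ≤ x t i := sub_nonneg.1 (hi ▸ norm_nonneg _ : 0 ≤ (x t - y t) i)
    calc (x' t - y' t) i
        ≤ f t (x t) i - f t (y t) i := sub_le_sub (hxf t ht i) (hyf t ht i)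
      _ ≤ L * ‖(x t - y t)⁺‖ :=
        (hf t ht).apply_sub_apply_le (hxD t htc) (hsupD t htc) hyx (hL t htc)
  have hnonpos := nonpos_of_deriv_right_le_mul_norm_posPart (hx.sub hy)
    (fun t ht => (hx' t ht).sub (hy' t ht)) (sub_nonpos.2 h0) hextremal
  exact fun t ht => sub_nonpos.1 (hnonpos t ht)

end Fintype

end

/-- for a system which is cooperative in a box (product of
intervals) `𝒳`, with `f` continuous, locally (on compact sets, uniformly in
time) Lipschitz in the state and type K in the state, initially ordered
solutions remain ordered on `[t₀, t₁]`. -/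
theorem stmt8 (n : ℕ) (hn : 0 < n) (X : Fin n → Set ℝ)
    (hX : ∀ i, (X i).OrdConnected)
    (box : Set (Fin n → ℝ)) (hbox : box = {x : Fin n → ℝ | ∀ i, x i ∈ X i})
    (f : ℝ → (Fin n → ℝ) → (Fin n → ℝ))
    (hcont : ContinuousOn (fun p : ℝ × (Fin n → ℝ) => f p.1 p.2) (Set.Ici 0 ×ˢ box))
    (hlip : ∀ K ⊆ box, IsCompact K → ∃ L : ℝ, ∀ t ≥ (0 : ℝ), ∀ x ∈ K, ∀ y ∈ K,
      ‖f t x - f t y‖ ≤ L * ‖x - y‖)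
    (hK : ∀ t ≥ (0 : ℝ), IsTypeKOn (f t) box)
    (t₀ t₁ : ℝ) (ht₀ : 0 ≤ t₀) (ht : t₀ < t₁)
    (x y : ℝ → Fin n → ℝ)
    (hxmem : ∀ t ∈ Set.Icc t₀ t₁, x t ∈ box)
    (hymem : ∀ t ∈ Set.Icc t₀ t₁, y t ∈ box)
    (hx : ∀ t ∈ Set.Icc t₀ t₁, HasDerivWithinAt x (f t (x t)) (Set.Icc t₀ t₁) t)
    (hy : ∀ t ∈ Set.Icc t₀ t₁, HasDerivWithinAt y (f t (y t)) (Set.Icc t₀ t₁) t)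
    (h0 : x t₀ ≤ y t₀) :
    ∀ t ∈ Set.Icc t₀ t₁, x t ≤ y t := by
  have hsup : SupClosed box := hbox ▸ fun _ ha _ hb i => LinearOrder.supClosed (X i) (ha i) (hb i)
  exact stmt8_general hsup
    (fun K hKbox hKc => (hlip K hKbox hKc).imp fun _ hL t h => hL t (ht₀.trans h.1))
    (fun t h => hK t (ht₀.trans h.1)) hxmem hymem
    (HasDerivWithinAt.continuousOn hx) (HasDerivWithinAt.continuousOn hy)
    (fun t h => hasDerivWithinAt_Ici_of_Icc h (hx t (Set.Ico_subset_Icc_self h)))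
    (fun t h => hasDerivWithinAt_Ici_of_Icc h (hy t (Set.Ico_subset_Icc_self h)))
    (fun _ _ => le_rfl) (fun _ _ => le_rfl) h0
end

section
/- Let 𝒳 = 𝒳₁ × ⋯ × 𝒳ₙ ⊆ ℝⁿ be a product of n intervals (a box). For any a¹, a² ∈ 𝒳 define b¹, b² ∈ ℝⁿ by b¹_i = min{a¹_i, a²_i} and b²_i = max{a¹_i, a²_i}. Then: (1) b¹, b² ∈ 𝒳; (2) b¹ ≤ aᵏ ≤ b² componentwise for k = 1,2; (3) |a¹ − a²|₁ = |b¹ − b²|₁. Moreover, let f : [0,∞) × 𝒳 → ℝⁿ be continuous, Lipschitz continuous in its second argument uniformly in the first on compact sets, and such that x ↦ f(t,x) is type K on 𝒳 for each t ≥ 0; fix 0 ≤ t₀ < t₁ and let x¹, x², y¹, y² : [t₀,t₁] → 𝒳 be differentiable solutions of ż(t) = f(t, z(t)) with x¹(t₀) = a¹, x²(t₀) = a², y¹(t₀) = b¹, y²(t₀) = b². Then |x¹(t) − x²(t)|₁ ≤ |y¹(t) − y²(t)|₁ for all t ∈ [t₀,t₁]. -/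
open Finset

/-! The point is that cooperative systems preserve order (Müller–Kamke). If `u` and `v` solve
`z' = f t z` and `w = u - v`, then at an index with `v i ≤ u i` the type K condition gives
`f t u i ≤ f t (u ⊔ v) i`, and `u ⊔ v` differs from `v` exactly by `w⁺`, so `w' i` is at most a
Lipschitz constant times the size of `w⁺`. Hence `∑ i, (w i)⁺ ^ 2` satisfies a Grönwall inequality,
and it stays zero if it starts at zero. As `b₁ ≤ aₖ ≤ b₂`, order preservation squeezes both
`x₁ t` and `x₂ t` between `y₁ t` and `y₂ t`, and two points of an order interval are at most as far
apart in the `1`-norm as its endpoints. -/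

open scoped NNReal

section OneNorm

variable {n : ℕ}

theorem onenorm_inf_sub_sup (x y : Fin n → ℝ) : onenorm (x ⊓ y - x ⊔ y) = onenorm (x - y) := by
  refine sum_congr rfl fun i _ ↦ ?_
  rw [Pi.sub_apply, abs_sub_comm, Pi.sup_apply, Pi.inf_apply, max_sub_min_eq_abs, abs_abs,
    abs_sub_comm, Pi.sub_apply]

theorem onenorm_sub_le_of_mem_Icc {x y a b : Fin n → ℝ} (hx : x ∈ Set.Icc a b)
    (hy : y ∈ Set.Icc a b) : onenorm (x - y) ≤ onenorm (a - b) := by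
  refine sum_le_sum fun i _ ↦ ?_
  calc |x i - y i| ≤ b i - a i := abs_sub_le_of_le_of_le (hx.1 i) (hx.2 i) (hy.1 i) (hy.2 i)
    _ ≤ |b i - a i| := le_abs_self _
    _ = |a i - b i| := abs_sub_comm _ _

end OneNorm

section Orthant

theorem hasDerivAt_posPart_sq (x : ℝ) : HasDerivAt (fun y : ℝ ↦ y⁺ ^ 2) (2 * x⁺) x := by
  have taylor_bound (y : ℝ) : |y⁺ ^ 2 - x⁺ ^ 2 - (y - x) * (2 * x⁺)| ≤ (y - x) ^ 2 := by
    rcases le_total y 0 with hy | hy <;> rcases le_total x 0 with hx | hx <;>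
      simp only [posPart_of_nonneg, posPart_of_nonpos, hx, hy] <;> rw [abs_le] <;>
      constructor <;> nlinarith [mul_nonneg (sub_nonneg.2 hx) (sub_nonneg.2 hy)]
  rw [hasDerivAt_iff_isLittleO]
  refine (Asymptotics.IsBigO.of_norm_le fun y ↦ ?_).trans_isLittleO
    (Asymptotics.isLittleO_pow_sub_sub x one_lt_two)
  simpa using taylor_bound y

variable {ι : Type*} [Fintype ι] {a b : ℝ}

theorem hasDerivWithinAt_sum_posPart_sq {w : ℝ → ι → ℝ} {w' : ι → ℝ} {s : Set ℝ} {t : ℝ}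
    (hw : HasDerivWithinAt w w' s t) :
    HasDerivWithinAt (fun τ ↦ ∑ i, (w τ i)⁺ ^ 2) (∑ i, 2 * (w t i)⁺ * w' i) s t :=
  .fun_sum fun i _ ↦
    (hasDerivAt_posPart_sq (w t i)).comp_hasDerivWithinAt (h₂ := fun y : ℝ ↦ y⁺ ^ 2) t
      (hasDerivWithinAt_pi.1 hw i)

theorem sum_posPart_mul_le {x d : ι → ℝ} {K : ℝ≥0}
    (h : ∀ i, 0 < x i → d i ≤ K * ∑ j, (x j)⁺) :
    ∑ i, 2 * (x i)⁺ * d i ≤ 2 * K * Fintype.card ι * ∑ i, (x i)⁺ ^ 2 := by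
  have term_le (i : ι) : (x i)⁺ * d i ≤ (x i)⁺ * (K * ∑ j, (x j)⁺) := by
    rcases le_or_gt (x i) 0 with hi | hi
    · simp only [posPart_of_nonpos hi, zero_mul, le_refl]
    · exact mul_le_mul_of_nonneg_left (h i hi) (posPart_nonneg _)
  calc ∑ i, 2 * (x i)⁺ * d i = 2 * ∑ i, (x i)⁺ * d i := by simp only [mul_sum, mul_assoc]
    _ ≤ 2 * ∑ i, (x i)⁺ * (K * ∑ j, (x j)⁺) := by gcongr 2 * ∑ i, ?_ with i; exact term_le i
    _ = 2 * K * (∑ i, (x i)⁺) ^ 2 := by rw [← sum_mul]; ring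
    _ ≤ 2 * K * (Fintype.card ι * ∑ i, (x i)⁺ ^ 2) := by gcongr; exact sq_sum_le_card_mul_sum_sq
    _ = 2 * K * Fintype.card ι * ∑ i, (x i)⁺ ^ 2 := by ring

theorem nonpos_of_deriv_right_le_mul {S S' : ℝ → ℝ} {C : ℝ} (hS : ContinuousOn S (Set.Icc a b))
    (hS' : ∀ t ∈ Set.Ico a b, HasDerivWithinAt S (S' t) (Set.Ici t) t)
    (ha : S a ≤ 0) (hle : ∀ t ∈ Set.Ico a b, S' t ≤ C * S t) :
    ∀ t ∈ Set.Icc a b, S t ≤ 0 := fun t ht ↦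
  (le_gronwallBound_of_liminf_deriv_right_le hS (fun τ hτ _ ↦ (hS' τ hτ).liminf_right_slope_le) ha
    (fun τ hτ ↦ (hle τ hτ).trans_eq (add_zero _).symm) t ht).trans_eq (gronwallBound_ε0_δ0 _ _)

theorem nonpos_of_deriv_right_le_mul_sum_posPart {w w' : ℝ → ι → ℝ} {K : ℝ≥0}
    (hw : ContinuousOn w (Set.Icc a b))
    (hw' : ∀ t ∈ Set.Ico a b, HasDerivWithinAt w (w' t) (Set.Ici t) t) (ha : w a ≤ 0)
    (hle : ∀ t ∈ Set.Ico a b, ∀ i, 0 < w t i → w' t i ≤ K * ∑ j, (w t j)⁺) :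
    ∀ t ∈ Set.Icc a b, w t ≤ 0 := by
  intro t ht i
  have hcont : ContinuousOn (fun τ ↦ ∑ i, (w τ i)⁺ ^ 2) (Set.Icc a b) :=
    continuousOn_finsetSum _ fun i _ ↦
      (continuous_posPart.comp_continuousOn (continuousOn_pi.1 hw i)).pow 2
  have hinit : ∑ i, (w a i)⁺ ^ 2 ≤ 0 :=
    (sum_eq_zero fun i _ ↦ by rw [posPart_of_nonpos (ha i), sq, zero_mul]).le
  have hsum : ∑ i, (w t i)⁺ ^ 2 ≤ 0 :=
    nonpos_of_deriv_right_le_mul hcont (fun τ hτ ↦ hasDerivWithinAt_sum_posPart_sq (hw' τ hτ))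
      hinit (fun τ hτ ↦ sum_posPart_mul_le (hle τ hτ)) t ht
  have hterm : (w t i)⁺ ^ 2 ≤ 0 :=
    (single_le_sum (f := fun j ↦ (w t j)⁺ ^ 2) (fun _ _ ↦ sq_nonneg _) (mem_univ i)).trans hsum
  exact posPart_eq_zero.1 (sq_nonpos_iff _ |>.1 hterm)

end Orthant

section Comparison

variable {n : ℕ}

theorem sub_apply_le_of_isTypeKOn {h : (Fin n → ℝ) → Fin n → ℝ} {D : Set (Fin n → ℝ)} {K : ℝ≥0}
    (hK : IsTypeKOn h D) (hL : LipschitzOnWith K h D) {x y : Fin n → ℝ} (hx : x ∈ D) (hy : y ∈ D)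
    (hxy : x ⊔ y ∈ D) {i : Fin n} (hi : y i ≤ x i) :
    h x i - h y i ≤ K * ∑ j, (x j - y j)⁺ := by
  have sup_sub_apply (j : Fin n) : (x ⊔ y - y) j = (x j - y j)⁺ := by
    rw [Pi.sub_apply, Pi.sup_apply, posPart_def, ← max_sub_sub_right, sub_self]
  have norm_le : ‖x ⊔ y - y‖ ≤ ∑ j, (x j - y j)⁺ := by
    refine (pi_norm_le_iff_of_nonneg (sum_nonneg fun _ _ ↦ posPart_nonneg _)).2 fun j ↦ ?_
    rw [sup_sub_apply, Real.norm_of_nonneg (posPart_nonneg _)]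
    exact single_le_sum (f := fun j ↦ (x j - y j)⁺) (fun _ _ ↦ posPart_nonneg _) (mem_univ j)
  calc h x i - h y i ≤ h (x ⊔ y) i - h y i :=
        sub_le_sub_right (hK x hx _ hxy le_sup_left i (max_eq_left hi).symm) _
    _ ≤ ‖(h (x ⊔ y) - h y) i‖ := Real.le_norm_self _
    _ ≤ ‖h (x ⊔ y) - h y‖ := norm_le_pi_norm _ i
    _ ≤ K * ‖x ⊔ y - y‖ := hL.norm_sub_le hxy hy
    _ ≤ K * ∑ j, (x j - y j)⁺ := by gcongr

theorem le_of_deriv_right_le_of_isTypeKOn {f : ℝ → (Fin n → ℝ) → Fin n → ℝ}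
    {D : Set (Fin n → ℝ)} {K : ℝ≥0} {a b : ℝ} {u u' v v' : ℝ → Fin n → ℝ} (hD : SupClosed D)
    (hK : ∀ t ∈ Set.Ico a b, IsTypeKOn (f t) D)
    (hL : ∀ t ∈ Set.Ico a b, LipschitzOnWith K (f t) D)
    (huD : ∀ t ∈ Set.Ico a b, u t ∈ D) (hvD : ∀ t ∈ Set.Ico a b, v t ∈ D)
    (hu : ContinuousOn u (Set.Icc a b)) (hv : ContinuousOn v (Set.Icc a b))
    (hu' : ∀ t ∈ Set.Ico a b, HasDerivWithinAt u (u' t) (Set.Ici t) t)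
    (hv' : ∀ t ∈ Set.Ico a b, HasDerivWithinAt v (v' t) (Set.Ici t) t)
    (hsub : ∀ t ∈ Set.Ico a b, u' t ≤ f t (u t)) (hsuper : ∀ t ∈ Set.Ico a b, f t (v t) ≤ v' t)
    (ha : u a ≤ v a) : ∀ t ∈ Set.Icc a b, u t ≤ v t := by
  have hdiff : ∀ t ∈ Set.Icc a b, u t - v t ≤ 0 :=
    nonpos_of_deriv_right_le_mul_sum_posPart (hu.sub hv) (fun t ht ↦ (hu' t ht).sub (hv' t ht))
      (sub_nonpos.2 ha) fun t ht i hi ↦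
        (sub_le_sub (hsub t ht i) (hsuper t ht i)).trans <|
          sub_apply_le_of_isTypeKOn (hK t ht) (hL t ht) (huD t ht) (hvD t ht)
            (hD (huD t ht) (hvD t ht)) (sub_pos.1 hi).le
  exact fun t ht ↦ sub_nonpos.1 (hdiff t ht)

theorem exists_mem_pi_subset_Icc {ι : Type*} {α : ι → Type*} [∀ i, LinearOrder (α i)]
    [∀ i, TopologicalSpace (α i)] [∀ i, OrderClosedTopology (α i)] {X : ∀ i, Set (α i)}
    {A : Set (∀ i, α i)} (hA : IsCompact A) (hne : A.Nonempty) (hAX : A ⊆ Set.univ.pi X) :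
    ∃ m ∈ Set.univ.pi X, ∃ M ∈ Set.univ.pi X, A ⊆ Set.Icc m M := by
  have hcompact (i : ι) : IsCompact (Function.eval i '' A) := hA.image (continuous_apply i)
  have himage (i : ι) : Function.eval i '' A ⊆ X i :=
    Set.image_subset_iff.2 fun x hx ↦ hAX hx i (Set.mem_univ i)
  choose m hm using fun i ↦ (hcompact i).exists_isLeast (hne.image _)
  choose M hM using fun i ↦ (hcompact i).exists_isGreatest (hne.image _)
  exact ⟨m, fun i _ ↦ himage i (hm i).1, M, fun i _ ↦ himage i (hM i).1, fun x hx ↦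
    ⟨fun i ↦ (hm i).2 (Set.mem_image_of_mem _ hx), fun i ↦ (hM i).2 (Set.mem_image_of_mem _ hx)⟩⟩

theorem le_of_isTypeKOn_pi {X : Fin n → Set ℝ} (hX : ∀ i, (X i).OrdConnected)
    {f : ℝ → (Fin n → ℝ) → Fin n → ℝ} {a b : ℝ}
    (hlip : ∀ A ⊆ Set.univ.pi X, IsCompact A →
      ∃ K : ℝ≥0, ∀ t ∈ Set.Icc a b, LipschitzOnWith K (f t) A)
    (hK : ∀ t ∈ Set.Icc a b, IsTypeKOn (f t) (Set.univ.pi X)) {u v : ℝ → Fin n → ℝ}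
    (huX : ∀ t ∈ Set.Icc a b, u t ∈ Set.univ.pi X) (hvX : ∀ t ∈ Set.Icc a b, v t ∈ Set.univ.pi X)
    (hu : ∀ t ∈ Set.Icc a b, HasDerivWithinAt u (f t (u t)) (Set.Icc a b) t)
    (hv : ∀ t ∈ Set.Icc a b, HasDerivWithinAt v (f t (v t)) (Set.Icc a b) t)
    (ha : u a ≤ v a) : ∀ t ∈ Set.Icc a b, u t ≤ v t := by
  intro t ht
  have hucont : ContinuousOn u (Set.Icc a b) := fun τ hτ ↦ (hu τ hτ).continuousWithinAt
  have hvcont : ContinuousOn v (Set.Icc a b) := fun τ hτ ↦ (hv τ hτ).continuousWithinAt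
  obtain ⟨m, hm, M, hM, hmM⟩ := exists_mem_pi_subset_Icc
    ((isCompact_Icc.image_of_continuousOn hucont).union
      (isCompact_Icc.image_of_continuousOn hvcont))
    (((Set.nonempty_of_mem ht).image u).inl)
    (Set.union_subset (Set.image_subset_iff.2 huX) (Set.image_subset_iff.2 hvX))
  have hsubbox : Set.Icc m M ⊆ Set.univ.pi X := (Set.ordConnected_pi fun i _ ↦ hX i).out hm hM
  obtain ⟨K, hL⟩ := hlip _ hsubbox isCompact_Icc
  have hsup : SupClosed (Set.Icc m M) := fun x hx y hy ↦
    ⟨le_sup_of_le_left hx.1, sup_le hx.2 hy.2⟩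
  have hIco {τ : ℝ} (hτ : τ ∈ Set.Ico a b) : τ ∈ Set.Icc a b := Set.Ico_subset_Icc_self hτ
  have hright {z z' : ℝ → Fin n → ℝ}
      (hz : ∀ τ ∈ Set.Icc a b, HasDerivWithinAt z (z' τ) (Set.Icc a b) τ) :
      ∀ τ ∈ Set.Ico a b, HasDerivWithinAt z (z' τ) (Set.Ici τ) τ := fun τ hτ ↦
    (hz τ (hIco hτ)).mono_of_mem_nhdsWithin (Icc_mem_nhdsGE_of_mem hτ)
  exact le_of_deriv_right_le_of_isTypeKOn hsup
    (fun τ hτ x hx y hy ↦ hK τ (hIco hτ) x (hsubbox hx) y (hsubbox hy)) (fun τ hτ ↦ hL τ (hIco hτ))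
    (fun τ hτ ↦ hmM (.inl (Set.mem_image_of_mem u (hIco hτ))))
    (fun τ hτ ↦ hmM (.inr (Set.mem_image_of_mem v (hIco hτ)))) hucont hvcont
    (hright hu) (hright hv) (fun _ _ ↦ le_rfl) (fun _ _ ↦ le_rfl) ha t ht

end Comparison

theorem stmt9_general {n : ℕ} {X : Fin n → Set ℝ} (hX : ∀ i, (X i).OrdConnected)
    {box : Set (Fin n → ℝ)} (hbox : box = Set.univ.pi X)
    {a₁ a₂ : Fin n → ℝ} (ha₁ : a₁ ∈ box) (ha₂ : a₂ ∈ box)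
    {b₁ b₂ : Fin n → ℝ} (hb₁ : b₁ = a₁ ⊓ a₂) (hb₂ : b₂ = a₁ ⊔ a₂)
    {f : ℝ → (Fin n → ℝ) → Fin n → ℝ} {t₀ t₁ : ℝ}
    (hlip : ∀ A ⊆ box, IsCompact A → ∃ L : ℝ, ∀ t ∈ Set.Icc t₀ t₁, ∀ x ∈ A, ∀ y ∈ A,
      ‖f t x - f t y‖ ≤ L * ‖x - y‖)
    (hK : ∀ t ∈ Set.Icc t₀ t₁, IsTypeKOn (f t) box)
    {x₁ x₂ y₁ y₂ : ℝ → Fin n → ℝ}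
    (hx₁mem : ∀ t ∈ Set.Icc t₀ t₁, x₁ t ∈ box) (hx₂mem : ∀ t ∈ Set.Icc t₀ t₁, x₂ t ∈ box)
    (hy₁mem : ∀ t ∈ Set.Icc t₀ t₁, y₁ t ∈ box) (hy₂mem : ∀ t ∈ Set.Icc t₀ t₁, y₂ t ∈ box)
    (hx₁ : ∀ t ∈ Set.Icc t₀ t₁, HasDerivWithinAt x₁ (f t (x₁ t)) (Set.Icc t₀ t₁) t)
    (hx₂ : ∀ t ∈ Set.Icc t₀ t₁, HasDerivWithinAt x₂ (f t (x₂ t)) (Set.Icc t₀ t₁) t)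
    (hy₁ : ∀ t ∈ Set.Icc t₀ t₁, HasDerivWithinAt y₁ (f t (y₁ t)) (Set.Icc t₀ t₁) t)
    (hy₂ : ∀ t ∈ Set.Icc t₀ t₁, HasDerivWithinAt y₂ (f t (y₂ t)) (Set.Icc t₀ t₁) t)
    (hix₁ : x₁ t₀ = a₁) (hix₂ : x₂ t₀ = a₂) (hiy₁ : y₁ t₀ = b₁) (hiy₂ : y₂ t₀ = b₂) :
    b₁ ∈ box ∧ b₂ ∈ box ∧
    (b₁ ≤ a₁ ∧ a₁ ≤ b₂) ∧ (b₁ ≤ a₂ ∧ a₂ ≤ b₂) ∧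
    onenorm (a₁ - a₂) = onenorm (b₁ - b₂) ∧
    ∀ t ∈ Set.Icc t₀ t₁, onenorm (x₁ t - x₂ t) ≤ onenorm (y₁ t - y₂ t) := by
  subst hbox hb₁ hb₂ hix₁ hix₂
  have hbox : IsSublattice (Set.univ.pi X) :=
    isSublattice_pi fun i _ ↦ LinearOrder.isSublattice (X i)
  have hlipOn (A : Set (Fin n → ℝ)) (hA : A ⊆ Set.univ.pi X) (hAc : IsCompact A) :
      ∃ K : ℝ≥0, ∀ t ∈ Set.Icc t₀ t₁, LipschitzOnWith K (f t) A := by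
    obtain ⟨L, hL⟩ := hlip A hA hAc
    exact ⟨L.toNNReal, fun t ht ↦ .of_dist_le' fun x hx y hy ↦ by
      simpa only [dist_eq_norm] using hL t ht x hx y hy⟩
  have hmono {u v : ℝ → Fin n → ℝ} := le_of_isTypeKOn_pi hX hlipOn hK (u := u) (v := v)
  refine ⟨hbox.infClosed ha₁ ha₂, hbox.supClosed ha₁ ha₂, ⟨inf_le_left, le_sup_left⟩,
    ⟨inf_le_right, le_sup_right⟩, (onenorm_inf_sub_sup _ _).symm, fun t ht ↦ ?_⟩
  exact onenorm_sub_le_of_mem_Icc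
    ⟨hmono hy₁mem hx₁mem hy₁ hx₁ (hiy₁.trans_le inf_le_left) t ht,
      hmono hx₁mem hy₂mem hx₁ hy₂ (le_sup_left.trans_eq hiy₂.symm) t ht⟩
    ⟨hmono hy₁mem hx₂mem hy₁ hx₂ (hiy₁.trans_le inf_le_right) t ht,
      hmono hx₂mem hy₂mem hx₂ hy₂ (le_sup_right.trans_eq hiy₂.symm) t ht⟩

/-- for points `a¹, a² ∈ 𝒳` (a box) and `b¹_i = min (a¹_i) (a²_i)`,
`b²_i = max (a¹_i) (a²_i)`: (1) `b¹, b² ∈ 𝒳`; (2) `b¹ ≤ aᵏ ≤ b²`;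
(3) `|a¹ - a²|₁ = |b¹ - b²|₁`; moreover, for solutions of a system cooperative
in `𝒳` started respectively at `a¹, a², b¹, b²` at time `t₀`,
`|x¹(t) - x²(t)|₁ ≤ |y¹(t) - y²(t)|₁` on `[t₀, t₁]`. -/
theorem stmt9 (n : ℕ) (hn : 0 < n) (X : Fin n → Set ℝ)
    (hX : ∀ i, (X i).OrdConnected)
    (box : Set (Fin n → ℝ)) (hbox : box = {x : Fin n → ℝ | ∀ i, x i ∈ X i})
    (a₁ a₂ : Fin n → ℝ) (ha₁ : a₁ ∈ box) (ha₂ : a₂ ∈ box)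
    (b₁ b₂ : Fin n → ℝ)
    (hb₁ : b₁ = fun i => min (a₁ i) (a₂ i)) (hb₂ : b₂ = fun i => max (a₁ i) (a₂ i))
    (f : ℝ → (Fin n → ℝ) → (Fin n → ℝ))
    (hcont : ContinuousOn (fun p : ℝ × (Fin n → ℝ) => f p.1 p.2) (Set.Ici 0 ×ˢ box))
    (hlip : ∀ K ⊆ box, IsCompact K → ∃ L : ℝ, ∀ t ≥ (0 : ℝ), ∀ x ∈ K, ∀ y ∈ K,
      ‖f t x - f t y‖ ≤ L * ‖x - y‖)
    (hK : ∀ t ≥ (0 : ℝ), IsTypeKOn (f t) box)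
    (t₀ t₁ : ℝ) (ht₀ : 0 ≤ t₀) (ht : t₀ < t₁)
    (x₁ x₂ y₁ y₂ : ℝ → Fin n → ℝ)
    (hx₁mem : ∀ t ∈ Set.Icc t₀ t₁, x₁ t ∈ box)
    (hx₂mem : ∀ t ∈ Set.Icc t₀ t₁, x₂ t ∈ box)
    (hy₁mem : ∀ t ∈ Set.Icc t₀ t₁, y₁ t ∈ box)
    (hy₂mem : ∀ t ∈ Set.Icc t₀ t₁, y₂ t ∈ box)
    (hx₁ : ∀ t ∈ Set.Icc t₀ t₁, HasDerivWithinAt x₁ (f t (x₁ t)) (Set.Icc t₀ t₁) t)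
    (hx₂ : ∀ t ∈ Set.Icc t₀ t₁, HasDerivWithinAt x₂ (f t (x₂ t)) (Set.Icc t₀ t₁) t)
    (hy₁ : ∀ t ∈ Set.Icc t₀ t₁, HasDerivWithinAt y₁ (f t (y₁ t)) (Set.Icc t₀ t₁) t)
    (hy₂ : ∀ t ∈ Set.Icc t₀ t₁, HasDerivWithinAt y₂ (f t (y₂ t)) (Set.Icc t₀ t₁) t)
    (hix₁ : x₁ t₀ = a₁) (hix₂ : x₂ t₀ = a₂) (hiy₁ : y₁ t₀ = b₁) (hiy₂ : y₂ t₀ = b₂) :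
    b₁ ∈ box ∧ b₂ ∈ box ∧
    (b₁ ≤ a₁ ∧ a₁ ≤ b₂) ∧ (b₁ ≤ a₂ ∧ a₂ ≤ b₂) ∧
    onenorm (a₁ - a₂) = onenorm (b₁ - b₂) ∧
    ∀ t ∈ Set.Icc t₀ t₁, onenorm (x₁ t - x₂ t) ≤ onenorm (y₁ t - y₂ t) :=
  stmt9_general hX (hbox.trans (Set.ext fun _ ↦ Set.mem_univ_pi.symm)) ha₁ ha₂ hb₁ hb₂
    (fun A hA hAc ↦ (hlip A hA hAc).imp fun _ hL t h ↦ hL t (ht₀.trans h.1))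
    (fun t h ↦ hK t (ht₀.trans h.1)) hx₁mem hx₂mem hy₁mem hy₂mem hx₁ hx₂ hy₁ hy₂
    hix₁ hix₂ hiy₁ hiy₂
end

section
/- Let 𝒳 = 𝒳₁ × ⋯ × 𝒳ₙ ⊆ ℝⁿ be a product of n intervals (a box), and let f : [0,∞) × 𝒳 → ℝⁿ be continuous, Lipschitz continuous in its second argument uniformly in the first on compact sets, and such that x ↦ f(t,x) is type K on 𝒳 for each t ≥ 0. Assume that for every τ ≥ 0 and ξ ∈ 𝒳 there exists a differentiable solution x : [τ,∞) → 𝒳 of ẋ(t) = f(t,x(t)) with x(τ) = ξ. Then the system is uniformly nonexpansive with respect to 𝒳 — i.e. for all 0 ≤ t₀ ≤ t₁ and all differentiable solutions x¹, x² : [t₀,t₁] → 𝒳 of ẋ(t) = f(t,x(t)) one has |x¹(t₁) − x²(t₁)|₁ ≤ |x¹(t₀) − x²(t₀)|₁ — if and only if for every τ ≥ 0 and every pair ξ¹, ξ² ∈ 𝒳 with ξ¹ ≤ ξ² componentwise, ∑_{i=1}^n (f_i(τ,ξ²) − f_i(τ,ξ¹)) ≤ 0. -/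
open Finset

/-!
Along two solutions `x` and `y`, the right derivative of `|x - y|₁` is the one-sided directional
derivative of the `1`-norm at `x - y` in the direction `f t x - f t y`, so nonexpansiveness means
that this quantity is never positive. On an ordered pair it dominates `∑ i, (f t ξ₂ i - f t ξ₁ i)`,
whence one implication. Conversely, coordinate `i` of `x ⊔ y` and `x ⊓ y` is that of `x` or of `y`,
so the type K condition bounds the `i`-th term of the directional derivative by
`f t (x ⊔ y) i - f t (x ⊓ y) i`, and the inequality for the ordered pair `x ⊓ y ≤ x ⊔ y` applies.
-/

/-- The one-sided directional derivative of `|·|` at `a` in the direction `d`. -/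
noncomputable def absDirDeriv (a d : ℝ) : ℝ :=
  if a = 0 then |d| else SignType.sign a * d

lemma le_absDirDeriv {a : ℝ} (ha : 0 ≤ a) (d : ℝ) : d ≤ absDirDeriv a d := by
  rcases ha.eq_or_lt with rfl | ha
  · simpa [absDirDeriv] using le_abs_self d
  · simp [absDirDeriv, ha, ha.ne']

lemma absDirDeriv_le {a d c : ℝ} (hnonneg : 0 ≤ a → d ≤ c) (hnonpos : a ≤ 0 → -d ≤ c) :
    absDirDeriv a d ≤ c := by
  rcases lt_trichotomy a 0 with ha | rfl | ha
  · simpa [absDirDeriv, ha, ha.ne] using hnonpos ha.le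
  · simpa [absDirDeriv] using abs_le'.2 ⟨hnonneg le_rfl, hnonpos le_rfl⟩
  · simpa [absDirDeriv, ha, ha.ne'] using hnonneg ha.le

lemma hasDerivWithinAt_Ici_abs_of_eq_zero {g : ℝ → ℝ} {d t : ℝ}
    (hg : HasDerivWithinAt g d (Set.Ici t) t) (ht : g t = 0) :
    HasDerivWithinAt (fun s => |g s|) |d| (Set.Ici t) t := by
  rw [← hasDerivWithinAt_Ioi_iff_Ici, hasDerivWithinAt_iff_tendsto_slope' Set.self_notMem_Ioi]
    at hg ⊢
  refine hg.abs.congr' ?_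
  filter_upwards [self_mem_nhdsWithin] with s hs
  have hts : 0 < s - t := sub_pos.2 hs
  simp [slope_def_field, ht, abs_div, abs_of_pos hts]

lemma hasDerivWithinAt_Ici_abs {g : ℝ → ℝ} {d t : ℝ}
    (hg : HasDerivWithinAt g d (Set.Ici t) t) :
    HasDerivWithinAt (fun s => |g s|) (absDirDeriv (g t) d) (Set.Ici t) t := by
  by_cases ht : g t = 0
  · simpa [absDirDeriv, ht] using hasDerivWithinAt_Ici_abs_of_eq_zero hg ht
  · rw [absDirDeriv, if_neg ht]
    exact (hasDerivAt_abs ht).comp_hasDerivWithinAt t hg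

lemma le_of_hasDerivWithinAt_Ici_nonpos {g g' : ℝ → ℝ} {a b : ℝ} (hab : a ≤ b)
    (hg : ContinuousOn g (Set.Icc a b))
    (hg' : ∀ t ∈ Set.Ico a b, HasDerivWithinAt g (g' t) (Set.Ici t) t)
    (hnonpos : ∀ t ∈ Set.Ico a b, g' t ≤ 0) : g b ≤ g a :=
  image_le_of_deriv_right_le_deriv_boundary (B := fun _ => g a) hg hg' le_rfl continuousOn_const
    (fun t _ => hasDerivWithinAt_const t _ _) hnonpos ⟨hab, le_rfl⟩

section OneNorm

variable {n : ℕ}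

lemma continuous_onenorm : Continuous (onenorm : (Fin n → ℝ) → ℝ) := by
  unfold onenorm
  fun_prop

/-- The one-sided directional derivative of the `1`-norm at `v` in the direction `w`. -/
noncomputable def onenormDirDeriv (v w : Fin n → ℝ) : ℝ :=
  ∑ i, absDirDeriv (v i) (w i)

lemma sum_le_onenormDirDeriv {v : Fin n → ℝ} (hv : 0 ≤ v) (w : Fin n → ℝ) :
    ∑ i, w i ≤ onenormDirDeriv v w :=
  sum_le_sum fun i _ => le_absDirDeriv (hv i) (w i)

lemma hasDerivWithinAt_Ici_onenorm {g : ℝ → Fin n → ℝ} {g' : Fin n → ℝ} {t : ℝ}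
    (hg : HasDerivWithinAt g g' (Set.Ici t) t) :
    HasDerivWithinAt (fun s => onenorm (g s)) (onenormDirDeriv (g t) g') (Set.Ici t) t :=
  HasDerivWithinAt.fun_sum fun i _ => hasDerivWithinAt_Ici_abs (hasDerivWithinAt_pi.1 hg i)

end OneNorm

section TypeK

variable {n : ℕ} {D : Set (Fin n → ℝ)} {h : (Fin n → ℝ) → Fin n → ℝ}

lemma IsTypeKOn.apply_sub_le_sup_sub_inf (hK : IsTypeKOn h D) (hD : IsSublattice D)
    {a b : Fin n → ℝ} (ha : a ∈ D) (hb : b ∈ D) {i : Fin n} (hba : b i ≤ a i) :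
    h a i - h b i ≤ h (a ⊔ b) i - h (a ⊓ b) i := by
  have hsup : h a i ≤ h (a ⊔ b) i :=
    hK a ha _ (hD.supClosed ha hb) le_sup_left i (sup_eq_left.2 hba).symm
  have hinf : h (a ⊓ b) i ≤ h b i :=
    hK _ (hD.infClosed ha hb) b hb inf_le_right i (inf_eq_right.2 hba)
  exact sub_le_sub hsup hinf

lemma IsTypeKOn.onenormDirDeriv_le (hK : IsTypeKOn h D) (hD : IsSublattice D)
    {a b : Fin n → ℝ} (ha : a ∈ D) (hb : b ∈ D) :
    onenormDirDeriv (a - b) (h a - h b) ≤ ∑ i, (h (a ⊔ b) i - h (a ⊓ b) i) := by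
  refine sum_le_sum fun i _ => absDirDeriv_le (fun hi => ?_) fun hi => ?_
  · exact hK.apply_sub_le_sup_sub_inf hD ha hb (sub_nonneg.1 hi)
  · rw [Pi.sub_apply, neg_sub, sup_comm, inf_comm]
    exact hK.apply_sub_le_sup_sub_inf hD hb ha (sub_nonpos.1 hi)

theorem IsTypeKOn.onenormDirDeriv_nonpos_iff (hK : IsTypeKOn h D) (hD : IsSublattice D) :
    (∀ a ∈ D, ∀ b ∈ D, onenormDirDeriv (a - b) (h a - h b) ≤ 0) ↔
      ∀ a ∈ D, ∀ b ∈ D, a ≤ b → ∑ i, (h b i - h a i) ≤ 0 where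
  mp hnonpos a ha b hb hab :=
    (sum_le_onenormDirDeriv (sub_nonneg.2 hab) (h b - h a)).trans (hnonpos b hb a ha)
  mpr hsum _ ha _ hb :=
    (hK.onenormDirDeriv_le hD ha hb).trans <|
      hsum _ (hD.infClosed ha hb) _ (hD.supClosed ha hb) inf_le_sup

end TypeK

section Solutions

/-- `x` is a solution of `ẋ = f t x` on the time set `s` with values in `D`; derivatives are taken
within `s`, hence one-sided at the endpoints of an interval. -/
def IsSolutionOn {E : Type*} [NormedAddCommGroup E] [NormedSpace ℝ E] (f : ℝ → E → E)
    (D : Set E) (s : Set ℝ) (x : ℝ → E) : Prop :=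
  ∀ t ∈ s, x t ∈ D ∧ HasDerivWithinAt x (f t (x t)) s t

namespace IsSolutionOn

variable {E : Type*} [NormedAddCommGroup E] [NormedSpace ℝ E] {f : ℝ → E → E} {D : Set E}
  {x : ℝ → E}

lemma mono {s s' : Set ℝ} (hx : IsSolutionOn f D s x) (hs : s' ⊆ s) : IsSolutionOn f D s' x :=
  fun t ht => ⟨(hx t (hs ht)).1, (hx t (hs ht)).2.mono hs⟩

lemma continuousOn {s : Set ℝ} (hx : IsSolutionOn f D s x) : ContinuousOn x s :=
  fun t ht => (hx t ht).2.continuousWithinAt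

lemma hasDerivWithinAt_Ici {a b t : ℝ} (hx : IsSolutionOn f D (Set.Icc a b) x)
    (ht : t ∈ Set.Ico a b) : HasDerivWithinAt x (f t (x t)) (Set.Ici t) t :=
  (hx t (Set.Ico_subset_Icc_self ht)).2.mono_of_mem_nhdsWithin <|
    Filter.mem_of_superset (Icc_mem_nhdsGE ht.2) (Set.Icc_subset_Icc_left ht.1)

end IsSolutionOn

variable {n : ℕ} {D : Set (Fin n → ℝ)} {f : ℝ → (Fin n → ℝ) → Fin n → ℝ}

/-- The system `ẋ = f t x` is uniformly nonexpansive with respect to `D`: on every time interval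
in `[0, ∞)`, the `1`-norm distance of two solutions in `D` does not grow from the initial to the
final time. -/
def UniformlyNonexpansive (f : ℝ → (Fin n → ℝ) → Fin n → ℝ) (D : Set (Fin n → ℝ)) : Prop :=
  ∀ t₀ t₁ : ℝ, 0 ≤ t₀ → t₀ ≤ t₁ → ∀ x₁ x₂ : ℝ → Fin n → ℝ,
    IsSolutionOn f D (Set.Icc t₀ t₁) x₁ → IsSolutionOn f D (Set.Icc t₀ t₁) x₂ →
    onenorm (x₁ t₁ - x₂ t₁) ≤ onenorm (x₁ t₀ - x₂ t₀)

lemma IsSolutionOn.hasDerivWithinAt_Ici_onenorm_sub {x y : ℝ → Fin n → ℝ} {a b t : ℝ}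
    (hx : IsSolutionOn f D (Set.Icc a b) x) (hy : IsSolutionOn f D (Set.Icc a b) y)
    (ht : t ∈ Set.Ico a b) :
    HasDerivWithinAt (fun s => onenorm (x s - y s))
      (onenormDirDeriv (x t - y t) (f t (x t) - f t (y t))) (Set.Ici t) t :=
  hasDerivWithinAt_Ici_onenorm ((hx.hasDerivWithinAt_Ici ht).sub (hy.hasDerivWithinAt_Ici ht))

lemma UniformlyNonexpansive.antitoneOn (hf : UniformlyNonexpansive f D) {x y : ℝ → Fin n → ℝ}
    {a b : ℝ} (ha : 0 ≤ a) (hx : IsSolutionOn f D (Set.Icc a b) x)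
    (hy : IsSolutionOn f D (Set.Icc a b) y) :
    AntitoneOn (fun t => onenorm (x t - y t)) (Set.Icc a b) := by
  intro s hs t ht hst
  have hsub : Set.Icc s t ⊆ Set.Icc a b := Set.Icc_subset_Icc hs.1 ht.2
  exact hf s t (ha.trans hs.1) hst x y (hx.mono hsub) (hy.mono hsub)

lemma UniformlyNonexpansive.onenormDirDeriv_nonpos (hf : UniformlyNonexpansive f D)
    {x y : ℝ → Fin n → ℝ} {a b : ℝ} (ha : 0 ≤ a) (hab : a < b)
    (hx : IsSolutionOn f D (Set.Icc a b) x) (hy : IsSolutionOn f D (Set.Icc a b) y) :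
    onenormDirDeriv (x a - y a) (f a (x a) - f a (y a)) ≤ 0 := by
  have hderiv := hx.hasDerivWithinAt_Ici_onenorm_sub hy (Set.left_mem_Ico.2 hab)
  have hacc : AccPt a (Filter.principal (Set.Icc a b)) :=
    (uniqueDiffOn_Icc hab a (Set.left_mem_Icc.2 hab.le)).accPt
  exact (hderiv.mono Set.Icc_subset_Ici_self).nonpos_of_antitoneOn hacc (hf.antitoneOn ha hx hy)

lemma uniformlyNonexpansive_of_onenormDirDeriv_nonpos
    (hf : ∀ t ≥ 0, ∀ a ∈ D, ∀ b ∈ D, onenormDirDeriv (a - b) (f t a - f t b) ≤ 0) :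
    UniformlyNonexpansive f D := by
  intro t₀ t₁ h₀ h₀₁ x y hx hy
  refine le_of_hasDerivWithinAt_Ici_nonpos (g := fun t => onenorm (x t - y t)) h₀₁
    (continuous_onenorm.comp_continuousOn (hx.continuousOn.sub hy.continuousOn))
    (fun t ht => hx.hasDerivWithinAt_Ici_onenorm_sub hy ht) fun t ht => ?_
  have ht' : t ∈ Set.Icc t₀ t₁ := Set.Ico_subset_Icc_self ht
  exact hf t (h₀.trans ht.1) _ (hx t ht').1 _ (hy t ht').1

theorem uniformlyNonexpansive_iff_onenormDirDeriv_nonpos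
    (hexist : ∀ τ ≥ 0, ∀ ξ ∈ D, ∃ ε > 0, ∃ x : ℝ → Fin n → ℝ, x τ = ξ ∧
      IsSolutionOn f D (Set.Icc τ (τ + ε)) x) :
    UniformlyNonexpansive f D ↔
      ∀ τ ≥ 0, ∀ a ∈ D, ∀ b ∈ D, onenormDirDeriv (a - b) (f τ a - f τ b) ≤ 0 := by
  refine ⟨fun hf τ hτ a ha b hb => ?_, uniformlyNonexpansive_of_onenormDirDeriv_nonpos⟩
  obtain ⟨ε, hε, x, rfl, hx⟩ := hexist τ hτ a ha
  obtain ⟨δ, hδ, y, rfl, hy⟩ := hexist τ hτ b hb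
  have hsub {η : ℝ} (h : min ε δ ≤ η) : Set.Icc τ (τ + min ε δ) ⊆ Set.Icc τ (τ + η) :=
    Set.Icc_subset_Icc_right (add_le_add_right h τ)
  exact hf.onenormDirDeriv_nonpos hτ (lt_add_of_pos_right τ (lt_min hε hδ))
    (hx.mono (hsub (min_le_left ε δ))) (hy.mono (hsub (min_le_right ε δ)))

theorem stmt11_general (hD : IsSublattice D) (hK : ∀ t ≥ 0, IsTypeKOn (f t) D)
    (hexist : ∀ τ ≥ 0, ∀ ξ ∈ D, ∃ ε > 0, ∃ x : ℝ → Fin n → ℝ, x τ = ξ ∧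
      IsSolutionOn f D (Set.Icc τ (τ + ε)) x) :
    UniformlyNonexpansive f D ↔
      ∀ τ ≥ 0, ∀ ξ₁ ∈ D, ∀ ξ₂ ∈ D, ξ₁ ≤ ξ₂ → ∑ i, (f τ ξ₂ i - f τ ξ₁ i) ≤ 0 :=
  (uniformlyNonexpansive_iff_onenormDirDeriv_nonpos hexist).trans <|
    forall₂_congr fun τ hτ => (hK τ hτ).onenormDirDeriv_nonpos_iff hD

end Solutions

/-- a system cooperative in a box `𝒳` (with solutions existing
forward in time from any initial condition in `𝒳`) is uniformly nonexpansive
with respect to `𝒳` (in the `1`-norm) if and only if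
`∑_i (f_i(τ,ξ²) - f_i(τ,ξ¹)) ≤ 0` for all `τ ≥ 0` and all ordered pairs
`ξ¹ ≤ ξ²` in `𝒳`. -/
theorem stmt11 (n : ℕ) (hn : 0 < n) (X : Fin n → Set ℝ)
    (hX : ∀ i, (X i).OrdConnected)
    (box : Set (Fin n → ℝ)) (hbox : box = {x : Fin n → ℝ | ∀ i, x i ∈ X i})
    (f : ℝ → (Fin n → ℝ) → (Fin n → ℝ))
    (hcont : ContinuousOn (fun p : ℝ × (Fin n → ℝ) => f p.1 p.2) (Set.Ici 0 ×ˢ box))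
    (hlip : ∀ K ⊆ box, IsCompact K → ∃ L : ℝ, ∀ t ≥ (0 : ℝ), ∀ x ∈ K, ∀ y ∈ K,
      ‖f t x - f t y‖ ≤ L * ‖x - y‖)
    (hK : ∀ t ≥ (0 : ℝ), IsTypeKOn (f t) box)
    (hexist : ∀ τ ≥ (0 : ℝ), ∀ ξ ∈ box, ∃ x : ℝ → Fin n → ℝ, x τ = ξ ∧
      ∀ t ≥ τ, x t ∈ box ∧ HasDerivAt x (f t (x t)) t) :
    (∀ t₀ t₁ : ℝ, 0 ≤ t₀ → t₀ ≤ t₁ → ∀ x₁ x₂ : ℝ → Fin n → ℝ,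
      (∀ t ∈ Set.Icc t₀ t₁, x₁ t ∈ box ∧
        HasDerivWithinAt x₁ (f t (x₁ t)) (Set.Icc t₀ t₁) t) →
      (∀ t ∈ Set.Icc t₀ t₁, x₂ t ∈ box ∧
        HasDerivWithinAt x₂ (f t (x₂ t)) (Set.Icc t₀ t₁) t) →
      onenorm (x₁ t₁ - x₂ t₁) ≤ onenorm (x₁ t₀ - x₂ t₀)) ↔
    (∀ τ ≥ (0 : ℝ), ∀ ξ₁ ∈ box, ∀ ξ₂ ∈ box, ξ₁ ≤ ξ₂ →
      (∑ i, (f τ ξ₂ i - f τ ξ₁ i)) ≤ 0) := by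
  have hD : IsSublattice box := by
    simpa [hbox, Set.pi] using
      isSublattice_pi (s := Set.univ) fun i _ => LinearOrder.isSublattice (X i)
  refine stmt11_general hD hK fun τ hτ ξ hξ => ?_
  obtain ⟨x, hxτ, hx⟩ := hexist τ hτ ξ hξ
  exact ⟨1, one_pos, x, hxτ, fun t ht => ⟨(hx t ht.1).1, (hx t ht.1).2.hasDerivWithinAt⟩⟩
end

section
/- Consider the compartmental system (S) on the box 𝒳 = [0,c₁] × ⋯ × [0,cₙ] with right-hand side Q satisfying assumptions (A1)–(A6). Then (S) is uniformly nonexpansive with respect to 𝒳: for all 0 ≤ t₀ ≤ t₁ and all differentiable solutions x¹, x² : [t₀,t₁] → 𝒳 of ẋ(t) = Q(t, x(t)), one has |x¹(t₁) − x²(t₁)|₁ ≤ |x¹(t₀) − x²(t₀)|₁. -/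
open Finset

/-- Regularity assumption (A1) for a scalar coefficient function
`h : [0,∞) × [0, ci] → ℝ`: continuity, nonnegativity and Lipschitz continuity
in the second argument uniformly in the first. -/
def A1fun (ci : ℝ) (h : ℝ → ℝ → ℝ) : Prop :=
  ContinuousOn (fun p : ℝ × ℝ => h p.1 p.2) (Set.Ici 0 ×ˢ Set.Icc 0 ci) ∧
  (∀ t ∈ Set.Ici (0 : ℝ), ∀ s ∈ Set.Icc 0 ci, 0 ≤ h t s) ∧
  ∃ L : ℝ, ∀ t ∈ Set.Ici (0 : ℝ), ∀ s₁ ∈ Set.Icc 0 ci, ∀ s₂ ∈ Set.Icc 0 ci,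
    |h t s₁ - h t s₂| ≤ L * |s₁ - s₂|

/-- The box `𝒳 = [0,c₁] × ⋯ × [0,cₙ]`. -/
def boxIcc {n : ℕ} (c : Fin n → ℝ) : Set (Fin n → ℝ) :=
  {x | ∀ i, x i ∈ Set.Icc 0 (c i)}

/-- Right-hand side of the compartmental system (S). -/
def Qrhs {n : ℕ} (f0 : Fin n → ℝ → ℝ → ℝ) (fc : Fin n → Fin n → ℝ → ℝ → ℝ)
    (g Ienv : Fin n → ℝ → ℝ → ℝ) (t : ℝ) (x : Fin n → ℝ) : Fin n → ℝ := fun i =>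
  (∑ j ∈ univ.erase i, fc i j t (x i) * g j t (x j)) + Ienv i t (x i)
    - (f0 i t (x i) + ∑ j ∈ univ.erase i, fc j i t (x j)) * g i t (x i)

/-!
Let `u` be the difference of two solutions. At each time the right derivative of `|u|₁` is
`∑ i, σ i * u' i` for some subgradient `σ i` of `|·|` at `u i`. Regrouping `Q` by transfers,
one unit moved from `j` to `i` contributes `σ i - σ j`. The rate of the transfer
`f i j (x i) * g j (x j)` decreases in `x i` and increases in `x j`, and the net exchange with the
environment decreases, so every term of the regrouped sum is nonpositive and `|u|₁` cannot grow.
-/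

/-- `σ` is a subgradient of `|·|` at `a`: the sign of `a` if `a ≠ 0`, and any element of `[-1, 1]`
if `a = 0`. It is the weight with which a component contributes to the right derivative of the
`1`-norm. -/
def IsAbsSubgradient (σ a : ℝ) : Prop :=
  |σ| ≤ 1 ∧ σ * a = |a|

theorem isAbsSubgradient_sign (a : ℝ) : IsAbsSubgradient (SignType.sign a) a := by
  refine ⟨?_, sign_mul_self a⟩
  rcases lt_trichotomy a 0 with ha | rfl | ha <;> simp [*]

namespace IsAbsSubgradient

variable {σ τ a x y : ℝ} {φ : ℝ → ℝ} {S : Set ℝ}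

theorem eq_one_of_pos (h : IsAbsSubgradient σ a) (ha : 0 < a) : σ = 1 :=
  mul_right_cancel₀ ha.ne' (by rw [h.2, abs_of_pos ha, one_mul])

protected theorem mul_nonneg (h : IsAbsSubgradient σ a) : 0 ≤ σ * a :=
  h.2 ▸ abs_nonneg a

theorem sub_mul_nonneg (h : IsAbsSubgradient σ a) (hτ : |τ| ≤ 1) : 0 ≤ (σ - τ) * a := by
  have hτa : τ * a ≤ |a| := calc
    τ * a ≤ |τ| * |a| := (le_abs_self _).trans_eq (abs_mul τ a)
    _ ≤ |a| := mul_le_of_le_one_left (abs_nonneg a) hτ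
  rw [sub_mul, h.2]
  exact sub_nonneg.2 hτa

protected theorem neg (h : IsAbsSubgradient σ a) : IsAbsSubgradient (-σ) (-a) := by
  rwa [IsAbsSubgradient, abs_neg, abs_neg, neg_mul_neg]

theorem map_sub_of_lt (h : IsAbsSubgradient σ (x - y)) (hφ : MonotoneOn φ S)
    (hx : x ∈ S) (hy : y ∈ S) (hyx : y < x) : IsAbsSubgradient σ (φ x - φ y) := by
  refine ⟨h.1, ?_⟩
  rw [h.eq_one_of_pos (sub_pos.2 hyx), one_mul,
    abs_of_nonneg (sub_nonneg.2 (hφ hy hx hyx.le))]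

theorem map_sub_of_monotoneOn (h : IsAbsSubgradient σ (x - y)) (hφ : MonotoneOn φ S)
    (hx : x ∈ S) (hy : y ∈ S) : IsAbsSubgradient σ (φ x - φ y) := by
  rcases lt_trichotomy x y with hxy | rfl | hyx
  · have h_neg : IsAbsSubgradient (-σ) (y - x) := neg_sub x y ▸ h.neg
    simpa only [neg_neg, neg_sub] using (h_neg.map_sub_of_lt hφ hy hx hxy).neg
  · exact ⟨h.1, by rw [sub_self, mul_zero, abs_zero]⟩
  · exact h.map_sub_of_lt hφ hx hy hyx

theorem map_sub_of_antitoneOn (h : IsAbsSubgradient σ (x - y)) (hφ : AntitoneOn φ S)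
    (hx : x ∈ S) (hy : y ∈ S) : IsAbsSubgradient σ (φ y - φ x) := by
  simpa only [neg_sub_neg] using h.map_sub_of_monotoneOn hφ.neg hx hy

theorem sub_mul_mul_sub_mul_nonpos {p q : ℝ} {f g : ℝ → ℝ} {T : Set ℝ}
    (hσ : IsAbsSubgradient σ (x - y)) (hτ : IsAbsSubgradient τ (p - q))
    (hf : AntitoneOn f S) (hf_nonneg : ∀ s ∈ S, 0 ≤ f s)
    (hg : MonotoneOn g T) (hg_nonneg : ∀ s ∈ T, 0 ≤ g s)
    (hx : x ∈ S) (hy : y ∈ S) (hp : p ∈ T) (hq : q ∈ T) :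
    (σ - τ) * (f x * g p - f y * g q) ≤ 0 := by
  have hf_term : 0 ≤ (σ - τ) * (f y - f x) :=
    (hσ.map_sub_of_antitoneOn hf hx hy).sub_mul_nonneg hτ.1
  have hg_term : 0 ≤ (τ - σ) * (g p - g q) :=
    (hτ.map_sub_of_monotoneOn hg hp hq).sub_mul_nonneg hσ.1
  calc (σ - τ) * (f x * g p - f y * g q)
      = -((σ - τ) * (f y - f x) * g p + f y * ((τ - σ) * (g p - g q))) := by ring
    _ ≤ 0 := neg_nonpos.2 <| add_nonneg (mul_nonneg hf_term (hg_nonneg p hp))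
        (mul_nonneg (hf_nonneg y hy) hg_term)

end IsAbsSubgradient

theorem hasDerivWithinAt_abs_of_eq_zero {z : ℝ → ℝ} {d t : ℝ}
    (h : HasDerivWithinAt z d (Set.Ici t) t) (hz : z t = 0) :
    HasDerivWithinAt (fun s => |z s|) |d| (Set.Ici t) t := by
  rw [← hasDerivWithinAt_Ioi_iff_Ici,
    hasDerivWithinAt_iff_tendsto_slope' Set.self_notMem_Ioi] at h ⊢
  refine h.abs.congr' ?_
  filter_upwards [self_mem_nhdsWithin] with s hs
  rw [slope_def_field, slope_def_field, hz, abs_zero, sub_zero, sub_zero, abs_div,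
    abs_of_pos (sub_pos.2 hs)]

theorem exists_isAbsSubgradient_hasDerivWithinAt_abs {z : ℝ → ℝ} {d t : ℝ}
    (h : HasDerivWithinAt z d (Set.Ici t) t) :
    ∃ σ, IsAbsSubgradient σ (z t) ∧
      HasDerivWithinAt (fun s => |z s|) (σ * d) (Set.Ici t) t := by
  by_cases hz : z t = 0
  · have hσ : IsAbsSubgradient (SignType.sign d) (z t) :=
      ⟨(isAbsSubgradient_sign d).1, by rw [hz, mul_zero, abs_zero]⟩
    refine ⟨SignType.sign d, hσ, ?_⟩
    rw [sign_mul_self]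
    exact hasDerivWithinAt_abs_of_eq_zero h hz
  · exact ⟨SignType.sign (z t), isAbsSubgradient_sign (z t),
      (hasDerivAt_abs hz).comp_hasDerivWithinAt t h⟩

theorem antitoneOn_of_hasDerivWithinAt_Ici_nonpos {φ : ℝ → ℝ} {a b : ℝ}
    (hφ : ContinuousOn φ (Set.Icc a b))
    (hφ' : ∀ t ∈ Set.Ico a b, ∃ d ≤ 0, HasDerivWithinAt φ d (Set.Ici t) t) :
    AntitoneOn φ (Set.Icc a b) := by
  intro s hs t ht hst
  choose! d hd_nonpos hd using hφ'
  have hsub : Set.Ico s b ⊆ Set.Ico a b := Set.Ico_subset_Ico_left hs.1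
  exact image_le_of_deriv_right_le_deriv_boundary (B := fun _ => φ s) (B' := fun _ => 0)
    (hφ.mono (Set.Icc_subset_Icc_left hs.1)) (fun r hr => hd r (hsub hr)) le_rfl
    continuousOn_const (fun r _ => hasDerivWithinAt_const r _ _)
    (fun r hr => hd_nonpos r (hsub hr)) ⟨hst, ht.2⟩

theorem antitoneOn_sum_abs {ι : Type*} [Fintype ι] {u u' : ℝ → ι → ℝ} {a b : ℝ}
    (hu : ∀ t ∈ Set.Icc a b, HasDerivWithinAt u (u' t) (Set.Icc a b) t)
    (hu' : ∀ t ∈ Set.Ico a b, ∀ σ : ι → ℝ, (∀ i, IsAbsSubgradient (σ i) (u t i)) →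
      ∑ i, σ i * u' t i ≤ 0) :
    AntitoneOn (fun t => ∑ i, |u t i|) (Set.Icc a b) := by
  have hu_cont : ContinuousOn u (Set.Icc a b) := fun t ht => (hu t ht).continuousWithinAt
  refine antitoneOn_of_hasDerivWithinAt_Ici_nonpos
    (continuousOn_finsetSum _ fun i _ => (continuousOn_pi.1 hu_cont i).abs) fun t ht => ?_
  have hu_right : HasDerivWithinAt u (u' t) (Set.Ici t) t :=
    (hu t (Set.Ico_subset_Icc_self ht)).mono_of_mem_nhdsWithin (Icc_mem_nhdsGE_of_mem ht)
  choose σ hσ hσ_deriv using fun i =>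
    exists_isAbsSubgradient_hasDerivWithinAt_abs (hasDerivWithinAt_pi.1 hu_right i)
  exact ⟨_, hu' t ht σ hσ, HasDerivWithinAt.fun_sum fun i _ => hσ_deriv i⟩

theorem sum_mul_inflow_sub_outflow {ι R : Type*} [Fintype ι] [DecidableEq ι]
    [NonUnitalNonAssocRing R]
    (σ : ι → R) (F : ι → ι → R) :
    ∑ i, σ i * (∑ j ∈ univ.erase i, F i j - ∑ j ∈ univ.erase i, F j i) =
      ∑ i, ∑ j ∈ univ.erase i, (σ i - σ j) * F i j := by
  have hswap : ∑ i, ∑ j ∈ univ.erase i, σ i * F j i = ∑ i, ∑ j ∈ univ.erase i, σ j * F i j :=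
    sum_comm' fun i j => by simp only [mem_univ, mem_erase, ne_comm, and_true, true_and]
  simp only [mul_sub, sub_mul, sum_sub_distrib, mul_sum, hswap]

section Compartmental

variable {n : ℕ} {S : Fin n → Set ℝ} {f0 : Fin n → ℝ → ℝ → ℝ} {fc : Fin n → Fin n → ℝ → ℝ → ℝ}
  {g Ienv : Fin n → ℝ → ℝ → ℝ}

theorem sum_mul_Qrhs (t : ℝ) (x σ : Fin n → ℝ) :
    ∑ i, σ i * Qrhs f0 fc g Ienv t x i =
      ∑ i, ∑ j ∈ univ.erase i, (σ i - σ j) * (fc i j t (x i) * g j t (x j)) +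
        ∑ i, σ i * (Ienv i t (x i) - f0 i t (x i) * g i t (x i)) := by
  rw [← sum_mul_inflow_sub_outflow, ← sum_add_distrib]
  refine sum_congr rfl fun i _ => ?_
  rw [Qrhs, add_mul, sum_mul]
  ring

/-- The sign and monotonicity conditions on the rates of the compartmental system (S) at time `t`,
with `x i` ranging over `S i`, that make (S) dissipative for the `1`-norm. In the transfer
`fc i j t (x i) * g j t (x j)` compartment `i` is the acceptor and `j` the donor. The environmental
inflow and outflow enter only through the net exchange `Ienv i - f0 i * g i`. -/
structure HasMonotoneRates (S : Fin n → Set ℝ) (f0 : Fin n → ℝ → ℝ → ℝ)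
    (fc : Fin n → Fin n → ℝ → ℝ → ℝ) (g Ienv : Fin n → ℝ → ℝ → ℝ) (t : ℝ) : Prop where
  acceptor_nonneg : ∀ i j, j ≠ i → ∀ s ∈ S i, 0 ≤ fc i j t s
  acceptor_antitoneOn : ∀ i j, j ≠ i → AntitoneOn (fc i j t) (S i)
  donor_nonneg : ∀ i, ∀ s ∈ S i, 0 ≤ g i t s
  donor_monotoneOn : ∀ i, MonotoneOn (g i t) (S i)
  exchange_antitoneOn : ∀ i, AntitoneOn (fun s => Ienv i t s - f0 i t s * g i t s) (S i)

theorem HasMonotoneRates.sum_mul_Qrhs_sub_nonpos {t : ℝ} (h : HasMonotoneRates S f0 fc g Ienv t)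
    {x y σ : Fin n → ℝ} (hx : ∀ i, x i ∈ S i) (hy : ∀ i, y i ∈ S i)
    (hσ : ∀ i, IsAbsSubgradient (σ i) (x i - y i)) :
    ∑ i, σ i * (Qrhs f0 fc g Ienv t x i - Qrhs f0 fc g Ienv t y i) ≤ 0 := by
  let exchange (i : Fin n) (s : ℝ) : ℝ := Ienv i t s - f0 i t s * g i t s
  have hexchange (i : Fin n) : σ i * (exchange i (x i) - exchange i (y i)) ≤ 0 := by
    have hsub : 0 ≤ σ i * (exchange i (y i) - exchange i (x i)) :=
      ((hσ i).map_sub_of_antitoneOn (h.exchange_antitoneOn i) (hx i) (hy i)).mul_nonneg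
    linarith
  have htransfer (i j : Fin n) (hj : j ∈ univ.erase i) :
      (σ i - σ j) * (fc i j t (x i) * g j t (x j) - fc i j t (y i) * g j t (y j)) ≤ 0 :=
    have hji : j ≠ i := ne_of_mem_erase hj
    (hσ i).sub_mul_mul_sub_mul_nonpos (hσ j)
      (h.acceptor_antitoneOn i j hji) (h.acceptor_nonneg i j hji)
      (h.donor_monotoneOn j) (h.donor_nonneg j) (hx i) (hy i) (hx j) (hy j)
  calc ∑ i, σ i * (Qrhs f0 fc g Ienv t x i - Qrhs f0 fc g Ienv t y i)
      = ∑ i, ∑ j ∈ univ.erase i,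
            (σ i - σ j) * (fc i j t (x i) * g j t (x j) - fc i j t (y i) * g j t (y j)) +
          ∑ i, σ i * (exchange i (x i) - exchange i (y i)) := by
        simp only [mul_sub _ (Qrhs _ _ _ _ _ _ _), mul_sub _ (exchange _ _),
          mul_sub _ (fc _ _ _ _ * _), sum_sub_distrib, sum_mul_Qrhs, exchange]
        ring
    _ ≤ 0 := add_nonpos (sum_nonpos fun i _ => sum_nonpos (htransfer i))
        (sum_nonpos fun i _ => hexchange i)

theorem hasMonotoneRates_of_A1fun {c : Fin n → ℝ} {t : ℝ} (ht : 0 ≤ t)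
    (hf0 : ∀ i, A1fun (c i) (f0 i)) (hg : ∀ i, A1fun (c i) (g i))
    (hfc : ∀ i j, j ≠ i → A1fun (c i) (fc i j))
    (hg_sub : ∀ i, ∀ xi yi : ℝ, 0 ≤ xi → xi ≤ yi → yi ≤ c i → yi - xi ≤ g i t yi - g i t xi)
    (hfc_anti : ∀ i j, j ≠ i → AntitoneOn (fc i j t) (Set.Icc 0 (c i)))
    (hf0_mono : ∀ i, MonotoneOn (f0 i t) (Set.Icc 0 (c i)))
    (hI_anti : ∀ i, AntitoneOn (Ienv i t) (Set.Icc 0 (c i))) :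
    HasMonotoneRates (fun i => Set.Icc 0 (c i)) f0 fc g Ienv t := by
  have hg_nonneg (i : Fin n) : ∀ s ∈ Set.Icc 0 (c i), 0 ≤ g i t s := (hg i).2.1 t ht
  have hg_mono (i : Fin n) : MonotoneOn (g i t) (Set.Icc 0 (c i)) := fun a ha b hb hab =>
    sub_nonneg.1 <| (sub_nonneg.2 hab).trans (hg_sub i a b ha.1 hab hb.2)
  have houtflow (i : Fin n) : MonotoneOn (fun s => f0 i t s * g i t s) (Set.Icc 0 (c i)) :=
    (hf0_mono i).mul (hg_mono i) ((hf0 i).2.1 t ht) (hg_nonneg i)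
  exact
    { acceptor_nonneg := fun i j hji => (hfc i j hji).2.1 t ht
      acceptor_antitoneOn := hfc_anti
      donor_nonneg := hg_nonneg
      donor_monotoneOn := hg_mono
      exchange_antitoneOn := fun i _ ha _ hb hab =>
        sub_le_sub (hI_anti i ha hb hab) (houtflow i ha hb hab) }

theorem stmt13_general {t₀ t₁ : ℝ}
    (hrates : ∀ t ∈ Set.Ico t₀ t₁, HasMonotoneRates S f0 fc g Ienv t) {x₁ x₂ : ℝ → Fin n → ℝ}
    (hx₁ : ∀ t ∈ Set.Icc t₀ t₁, (∀ i, x₁ t i ∈ S i) ∧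
      HasDerivWithinAt x₁ (Qrhs f0 fc g Ienv t (x₁ t)) (Set.Icc t₀ t₁) t)
    (hx₂ : ∀ t ∈ Set.Icc t₀ t₁, (∀ i, x₂ t i ∈ S i) ∧
      HasDerivWithinAt x₂ (Qrhs f0 fc g Ienv t (x₂ t)) (Set.Icc t₀ t₁) t) :
    AntitoneOn (fun t => onenorm (x₁ t - x₂ t)) (Set.Icc t₀ t₁) :=
  antitoneOn_sum_abs (fun t ht => (hx₁ t ht).2.sub (hx₂ t ht).2) fun t ht _ hσ =>
    have ht' := Set.Ico_subset_Icc_self ht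
    (hrates t ht).sum_mul_Qrhs_sub_nonpos (hx₁ t ht').1 (hx₂ t ht').1 hσ

end Compartmental

/-- under assumptions (A1)–(A6), the compartmental system (S) is
uniformly nonexpansive with respect to the box `𝒳` in the `1`-norm. -/
theorem stmt13 (n : ℕ) (hn : 0 < n) (c : Fin n → ℝ) (hc : ∀ i, 0 < c i)
    (f0 : Fin n → ℝ → ℝ → ℝ) (fc : Fin n → Fin n → ℝ → ℝ → ℝ)
    (g Ienv : Fin n → ℝ → ℝ → ℝ)
    (hA1 : (∀ i, A1fun (c i) (f0 i)) ∧ (∀ i, A1fun (c i) (g i)) ∧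
      (∀ i, A1fun (c i) (Ienv i)) ∧ ∀ i j, j ≠ i → A1fun (c i) (fc i j))
    (hA2 : ∀ t ≥ (0 : ℝ), ∀ i, Ienv i t 0 = 0 ∧ Ienv i t (c i) = 0 ∧
      g i t 0 = 0 ∧ ∀ j, j ≠ i → fc i j t (c i) = 0)
    (hA3 : ∀ t ≥ (0 : ℝ), ∀ i, ∀ xi yi : ℝ, 0 ≤ xi → xi ≤ yi → yi ≤ c i →
      yi - xi ≤ g i t yi - g i t xi)
    (hA4 : ∀ t ≥ (0 : ℝ), ∀ i j, j ≠ i → AntitoneOn (fc i j t) (Set.Icc 0 (c i)))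
    (hA5 : ∀ t ≥ (0 : ℝ), ∀ i, MonotoneOn (f0 i t) (Set.Icc 0 (c i)))
    (hA6 : ∀ t ≥ (0 : ℝ), ∀ i, AntitoneOn (Ienv i t) (Set.Icc 0 (c i))) :
    ∀ t₀ t₁ : ℝ, 0 ≤ t₀ → t₀ ≤ t₁ → ∀ x₁ x₂ : ℝ → Fin n → ℝ,
      (∀ t ∈ Set.Icc t₀ t₁, x₁ t ∈ boxIcc c ∧
        HasDerivWithinAt x₁ (Qrhs f0 fc g Ienv t (x₁ t)) (Set.Icc t₀ t₁) t) →
      (∀ t ∈ Set.Icc t₀ t₁, x₂ t ∈ boxIcc c ∧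
        HasDerivWithinAt x₂ (Qrhs f0 fc g Ienv t (x₂ t)) (Set.Icc t₀ t₁) t) →
      onenorm (x₁ t₁ - x₂ t₁) ≤ onenorm (x₁ t₀ - x₂ t₀) := by
  intro t₀ t₁ h0 h01 x₁ x₂ hx₁ hx₂
  refine stmt13_general (fun t ht => ?_) hx₁ hx₂ ⟨le_rfl, h01⟩ ⟨h01, le_rfl⟩ h01
  have ht0 : 0 ≤ t := h0.trans ht.1
  exact hasMonotoneRates_of_A1fun ht0 hA1.1 hA1.2.1 hA1.2.2.2 (hA3 t ht0) (hA4 t ht0) (hA5 t ht0)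
    (hA6 t ht0)
end

section
/- Consider the compartmental system (S) on the box 𝒳 = [0,c₁] × ⋯ × [0,cₙ] satisfying assumptions (A1)–(A5), and let F(t,x) be its associated compartmental matrix and g(t,x) = (g₁(t,x₁),…,gₙ(t,xₙ)). Then there exists a finite constant b̃ ≥ 0 (one may take b̃ = max_{1≤i<j≤n} ḡ_j L_{ij}, where ḡ_j = sup_{t≥0} g_j(t,c_j) and L_{ij} is a Lipschitz constant, uniform in t, of x_i ↦ f_{ij}(t,x_i) on [0,c_i]) such that for every t ≥ 0 and every x, y ∈ 𝒳 with x ≤ y componentwise there is a compartmental matrix D(t,x,y) ∈ ℝ^{n×n} with D_{ij}(t,x,y) ≤ b̃ for all 1 ≤ i < j ≤ n and F(t,y) g(t,y) − F(t,x) g(t,x) = (F(t,y) + D(t,x,y)) (g(t,y) − g(t,x)). -/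
/-!
With `Δ = g(y) - g(x)`, split the increment as
`F(y) g(y) - F(x) g(x) = F(y) Δ + (F(y) - F(x)) g(x)`. Applied to a vector `v`, a compartmental
matrix sums the net transfers `A i j * v j - A j i * v i` and subtracts the losses `e i * v i`;
increasing `x` to `y` lowers every transfer rate and raises every loss rate. Since the rate `f_{ij}`
depends on the receiving coordinate `x_i` only, dividing the decrease of the flow `j → i` by `Δ i`
turns it into a nonnegative rate for the reverse flow `i → j`, and likewise the increase of the loss
from `i` becomes a nonnegative loss rate; these are the rates of `D`. By (A3), `Δ i = 0` forces
`y i = x i`, so nothing is lost where the division is by zero, and `y i - x i ≤ Δ i`, so the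
transfer rates are bounded by Lipschitz constants of `f_{ij}` times bounds on `g`.
-/

open Finset

/-- The compartmental matrix `F(t,x)` of system (S):
`F_{ij}(t,x) = f_{ij}(t,x_i)` for `j ≠ i`, and
`F_{ii}(t,x) = -f_{0i}(t,x_i) - ∑_{j≠i} f_{ji}(t,x_j)`. -/
def Fmat {n : ℕ} (f0 : Fin n → ℝ → ℝ → ℝ) (fc : Fin n → Fin n → ℝ → ℝ → ℝ)
    (t : ℝ) (x : Fin n → ℝ) : Matrix (Fin n) (Fin n) ℝ :=
  Matrix.of fun i j =>
    if i = j then -(f0 i t (x i)) - ∑ k ∈ univ.erase i, fc k i t (x k)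
    else fc i j t (x i)

/-- The vector `g(t,x) = (g₁(t,x₁),…,gₙ(t,xₙ))`. -/
def gvec {n : ℕ} (g : Fin n → ℝ → ℝ → ℝ) (t : ℝ) (x : Fin n → ℝ) : Fin n → ℝ :=
  fun i => g i t (x i)

open scoped Matrix NNReal

section RateMatrix

variable {ι R : Type*} [Fintype ι] [DecidableEq ι]

/-- The matrix of the linear compartmental system with loss rates `e` to the environment and
transfer rates `A i j` from `j` to `i`. The diagonal entries of `A` cancel, which allows the sum to
range over all `k` rather than over `k ≠ j`. -/
def rateMatrix [Ring R] (e : ι → R) (A : Matrix ι ι R) : Matrix ι ι R :=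
  A - Matrix.diagonal fun j => e j + ∑ k, A k j

section Ring

variable [Ring R] (e : ι → R) (A : Matrix ι ι R)

lemma rateMatrix_apply_self (i : ι) :
    rateMatrix e A i i = -e i - ∑ k ∈ univ.erase i, A k i := by
  rw [rateMatrix, Matrix.sub_apply, Matrix.diagonal_apply_eq, ← add_sum_erase _ _ (mem_univ i)]
  abel

lemma rateMatrix_apply_ne {i j : ι} (hij : i ≠ j) : rateMatrix e A i j = A i j := by
  rw [rateMatrix, Matrix.sub_apply, Matrix.diagonal_apply_ne _ hij, sub_zero]

lemma sum_rateMatrix (j : ι) : ∑ i, rateMatrix e A i j = -e j := by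
  simp [rateMatrix, Matrix.diagonal_apply, sum_sub_distrib]

lemma rateMatrix_mulVec_apply (v : ι → R) (i : ι) :
    (rateMatrix e A *ᵥ v) i = ∑ j, (A i j * v j - A j i * v i) - e i * v i := by
  rw [rateMatrix, Matrix.sub_mulVec, Pi.sub_apply, Matrix.mulVec_diagonal, sum_sub_distrib,
    ← sum_mul, add_mul, add_comm, ← sub_sub, Matrix.mulVec, dotProduct]

end Ring

lemma isCompartmental_rateMatrix {n : ℕ} {e : Fin n → ℝ} {A : Matrix (Fin n) (Fin n) ℝ}
    (he : ∀ i, 0 ≤ e i) (hA : ∀ i j, i ≠ j → 0 ≤ A i j) : IsCompartmental (rateMatrix e A) :=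
  ⟨fun i j hij => (hA i j hij).trans_eq (rateMatrix_apply_ne e A hij).symm,
    fun i => (sum_rateMatrix e A i).trans_le (neg_nonpos.2 (he i))⟩

lemma Fmat_eq_rateMatrix {n : ℕ} (f0 : Fin n → ℝ → ℝ → ℝ) (fc : Fin n → Fin n → ℝ → ℝ → ℝ)
    (t : ℝ) (x : Fin n → ℝ) :
    Fmat f0 fc t x = rateMatrix (fun i => f0 i t (x i)) (Matrix.of fun i j => fc i j t (x i)) := by
  ext i j
  obtain rfl | hij := eq_or_ne i j
  · simp [Fmat, rateMatrix_apply_self]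
  · simp [Fmat, rateMatrix_apply_ne, hij]

end RateMatrix

section SecantMatrix

/-- The matrix `D` through which the change of rates from `(e, A)` to `(e', A')`, acting on `v`,
factors over `w - v`; see `secantMatrix_mulVec_sub`. The swapped indices in `A j i` turn a decrease
of the flow from `i` to `j` into a flow from `j` to `i`. Where `w j = v j`, division by zero makes
the column `j` vanish. -/
def secantMatrix {ι K : Type*} [Fintype ι] [DecidableEq ι] [Field K]
    (e e' : ι → K) (A A' : Matrix ι ι K) (v w : ι → K) : Matrix ι ι K :=
  rateMatrix (fun i => (e' i - e i) * v i / (w i - v i))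
    (Matrix.of fun i j => (A j i - A' j i) * v i / (w j - v j))

variable {ι K : Type*} [Fintype ι] [DecidableEq ι] [Field K]
  {e e' : ι → K} {A A' : Matrix ι ι K} {v w : ι → K}

lemma secantMatrix_mulVec_sub (he : ∀ i, w i = v i → e' i = e i)
    (hA : ∀ i j, w i = v i → A' i j = A i j) :
    secantMatrix e e' A A' v w *ᵥ (w - v) = (rateMatrix e' A' - rateMatrix e A) *ᵥ v := by
  have loss_cancel (i : ι) :
      (e' i - e i) * v i / (w i - v i) * (w i - v i) = (e' i - e i) * v i :=
    div_mul_cancel_of_imp fun h => by rw [he i (sub_eq_zero.1 h), sub_self, zero_mul]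
  have transfer_cancel (i j : ι) :
      (A j i - A' j i) * v i / (w j - v j) * (w j - v j) = (A j i - A' j i) * v i :=
    div_mul_cancel_of_imp fun h => by rw [hA j i (sub_eq_zero.1 h), sub_self, zero_mul]
  ext i
  simp only [secantMatrix, Matrix.sub_mulVec, Pi.sub_apply, rateMatrix_mulVec_apply,
    Matrix.of_apply, loss_cancel, transfer_cancel]
  rw [sub_sub_sub_comm, ← sum_sub_distrib, ← sub_mul]
  congr 1
  exact sum_congr rfl fun j _ => by ring

lemma rateMatrix_mulVec_sub_rateMatrix_mulVec (he : ∀ i, w i = v i → e' i = e i)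
    (hA : ∀ i j, w i = v i → A' i j = A i j) :
    rateMatrix e' A' *ᵥ w - rateMatrix e A *ᵥ v =
      (rateMatrix e' A' + secantMatrix e e' A A' v w) *ᵥ (w - v) := by
  rw [Matrix.add_mulVec, secantMatrix_mulVec_sub he hA, Matrix.mulVec_sub, Matrix.sub_mulVec,
    sub_add_sub_cancel]

lemma isCompartmental_secantMatrix {n : ℕ} {e e' : Fin n → ℝ} {A A' : Matrix (Fin n) (Fin n) ℝ}
    {v w : Fin n → ℝ} (hv : 0 ≤ v) (hvw : v ≤ w) (he : e ≤ e')
    (hA : ∀ i j, i ≠ j → A' i j ≤ A i j) : IsCompartmental (secantMatrix e e' A A' v w) :=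
  isCompartmental_rateMatrix
    (fun i => div_nonneg (mul_nonneg (sub_nonneg.2 (he i)) (hv i)) (sub_nonneg.2 (hvw i)))
    fun i j hij => div_nonneg (mul_nonneg (sub_nonneg.2 (hA j i hij.symm)) (hv i))
      (sub_nonneg.2 (hvw j))

lemma secantMatrix_apply_le [LinearOrder K] [IsStrictOrderedRing K] {i j : ι} (hij : i ≠ j)
    {L M : K} (hL : 0 ≤ L) (hvi : 0 ≤ v i) (hvM : v i ≤ M) (hvw : v j ≤ w j)
    (hA : A j i - A' j i ≤ L * (w j - v j)) : secantMatrix e e' A A' v w i j ≤ L * M := by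
  rw [secantMatrix, rateMatrix_apply_ne _ _ hij, Matrix.of_apply]
  have hΔ : 0 ≤ w j - v j := sub_nonneg.2 hvw
  refine div_le_of_le_mul₀ hΔ (mul_nonneg hL (hvi.trans hvM)) ?_
  calc (A j i - A' j i) * v i ≤ L * (w j - v j) * M :=
        mul_le_mul hA hvM hvi (mul_nonneg hL hΔ)
    _ = L * M * (w j - v j) := mul_right_comm _ _ _

end SecantMatrix

lemma exists_isCompartmental_Fmat_mulVec_sub {n : ℕ} {c : Fin n → ℝ} {f0 : Fin n → ℝ → ℝ → ℝ}
    {fc : Fin n → Fin n → ℝ → ℝ → ℝ} {g : Fin n → ℝ → ℝ → ℝ} {t : ℝ}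
    {L : Fin n → Fin n → ℝ≥0} {M : Fin n → ℝ}
    (hg_nonneg : ∀ i, ∀ s ∈ Set.Icc 0 (c i), 0 ≤ g i t s)
    (hg_le : ∀ i, ∀ s ∈ Set.Icc 0 (c i), g i t s ≤ M i)
    (hg_expand : ∀ i, ∀ xi yi : ℝ, 0 ≤ xi → xi ≤ yi → yi ≤ c i → yi - xi ≤ g i t yi - g i t xi)
    (hfc_lip : ∀ i j, j ≠ i → LipschitzOnWith (L i j) (fc i j t) (Set.Icc 0 (c i)))
    (hfc_anti : ∀ i j, j ≠ i → AntitoneOn (fc i j t) (Set.Icc 0 (c i)))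
    (hf0_mono : ∀ i, MonotoneOn (f0 i t) (Set.Icc 0 (c i)))
    {x y : Fin n → ℝ} (hx : x ∈ boxIcc c) (hy : y ∈ boxIcc c) (hxy : x ≤ y) :
    ∃ D : Matrix (Fin n) (Fin n) ℝ, IsCompartmental D ∧ (∀ i j, i ≠ j → D i j ≤ L j i * M i) ∧
      Fmat f0 fc t y *ᵥ gvec g t y - Fmat f0 fc t x *ᵥ gvec g t x =
        (Fmat f0 fc t y + D) *ᵥ (gvec g t y - gvec g t x) := by
  have hΔ (i : Fin n) : y i - x i ≤ gvec g t y i - gvec g t x i :=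
    hg_expand i _ _ (hx i).1 (hxy i) (hy i).2
  have hgxy : gvec g t x ≤ gvec g t y := fun i =>
    sub_nonneg.1 ((sub_nonneg.2 (hxy i)).trans (hΔ i))
  have hgx : 0 ≤ gvec g t x := fun i => hg_nonneg i _ (hx i)
  have eq_of_gvec_eq (i : Fin n) (h : gvec g t y i = gvec g t x i) : y i = x i :=
    (sub_nonpos.1 ((hΔ i).trans_eq (sub_eq_zero.2 h))).antisymm (hxy i)
  have hfc_sub_le (i j : Fin n) (hij : j ≠ i) :
      fc i j t (x i) - fc i j t (y i) ≤ L i j * (gvec g t y i - gvec g t x i) :=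
    calc fc i j t (x i) - fc i j t (y i)
      _ ≤ L i j * dist (x i) (y i) :=
        (le_abs_self _).trans ((hfc_lip i j hij).dist_le_mul _ (hx i) _ (hy i))
      _ = L i j * (y i - x i) := by
        rw [dist_comm, Real.dist_eq, abs_of_nonneg (sub_nonneg.2 (hxy i))]
      _ ≤ L i j * (gvec g t y i - gvec g t x i) := mul_le_mul_of_nonneg_left (hΔ i) (L i j).2
  simp only [Fmat_eq_rateMatrix]
  refine ⟨_, isCompartmental_secantMatrix hgx hgxy
      (fun i => hf0_mono i (hx i) (hy i) (hxy i))
      (fun i j hij => hfc_anti i j hij.symm (hx i) (hy i) (hxy i)), fun i j hij => ?_,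
    rateMatrix_mulVec_sub_rateMatrix_mulVec (fun i h => ?_) fun i j h => ?_⟩
  · exact secantMatrix_apply_le hij (L j i).2 (hgx i) (hg_le i _ (hx i)) (hgxy j)
      (hfc_sub_le j i hij)
  · rw [eq_of_gvec_eq i h]
  · simp only [Matrix.of_apply, eq_of_gvec_eq i h]

namespace A1fun

variable {ci : ℝ} {h : ℝ → ℝ → ℝ}

lemma exists_lipschitzOnWith (hh : A1fun ci h) :
    ∃ L : ℝ≥0, ∀ t ≥ 0, LipschitzOnWith L (h t) (Set.Icc 0 ci) := by
  obtain ⟨-, -, L, hL⟩ := hh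
  refine ⟨L.toNNReal, fun t ht => LipschitzOnWith.of_dist_le_mul fun s₁ hs₁ s₂ hs₂ => ?_⟩
  calc dist (h t s₁) (h t s₂) ≤ L * dist s₁ s₂ := hL t ht s₁ hs₁ s₂ hs₂
    _ ≤ L.toNNReal * dist s₁ s₂ := by gcongr; exact L.le_coe_toNNReal

lemma exists_forall_le (hh : A1fun ci h) (h_zero : ∀ t ≥ 0, h t 0 = 0) :
    ∃ M : ℝ, ∀ t ≥ 0, ∀ s ∈ Set.Icc 0 ci, h t s ≤ M := by
  obtain ⟨L, hL⟩ := hh.exists_lipschitzOnWith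
  refine ⟨L * ci, fun t ht s hs => ?_⟩
  calc h t s = h t s - h t 0 := by rw [h_zero t ht, sub_zero]
    _ ≤ L * dist s 0 := (le_abs_self _).trans
        ((hL t ht).dist_le_mul s hs 0 ⟨le_rfl, hs.1.trans hs.2⟩)
    _ = L * s := by rw [Real.dist_0_eq_abs, abs_of_nonneg hs.1]
    _ ≤ L * ci := by gcongr; exact hs.2

end A1fun

theorem stmt14_general {n : ℕ} {c : Fin n → ℝ} {f0 : Fin n → ℝ → ℝ → ℝ}
    {fc : Fin n → Fin n → ℝ → ℝ → ℝ} {g : Fin n → ℝ → ℝ → ℝ}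
    (hg_nonneg : ∀ t ≥ (0 : ℝ), ∀ i, ∀ s ∈ Set.Icc 0 (c i), 0 ≤ g i t s)
    (hg_bdd : ∀ i, ∃ M : ℝ, ∀ t ≥ (0 : ℝ), ∀ s ∈ Set.Icc 0 (c i), g i t s ≤ M)
    (hg_expand : ∀ t ≥ (0 : ℝ), ∀ i, ∀ xi yi : ℝ, 0 ≤ xi → xi ≤ yi → yi ≤ c i →
      yi - xi ≤ g i t yi - g i t xi)
    (hfc_lip : ∀ i j, j ≠ i → ∃ L : ℝ≥0, ∀ t ≥ (0 : ℝ),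
      LipschitzOnWith L (fc i j t) (Set.Icc 0 (c i)))
    (hfc_anti : ∀ t ≥ (0 : ℝ), ∀ i j, j ≠ i → AntitoneOn (fc i j t) (Set.Icc 0 (c i)))
    (hf0_mono : ∀ t ≥ (0 : ℝ), ∀ i, MonotoneOn (f0 i t) (Set.Icc 0 (c i))) :
    ∃ b : ℝ, 0 ≤ b ∧ ∀ t ≥ (0 : ℝ), ∀ x ∈ boxIcc c, ∀ y ∈ boxIcc c, x ≤ y →
      ∃ D : Matrix (Fin n) (Fin n) ℝ, IsCompartmental D ∧ (∀ i j, i ≠ j → D i j ≤ b) ∧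
        Fmat f0 fc t y *ᵥ gvec g t y - Fmat f0 fc t x *ᵥ gvec g t x =
          (Fmat f0 fc t y + D) *ᵥ (gvec g t y - gvec g t x) := by
  choose M hM using hg_bdd
  choose! L hL using hfc_lip
  obtain ⟨b, hb⟩ := Finite.bddAbove_range fun p : Fin n × Fin n => (L p.2 p.1 : ℝ) * M p.1
  refine ⟨max b 0, le_max_right _ _, fun t ht x hx y hy hxy => ?_⟩
  obtain ⟨D, hD, hD_le, hD_eq⟩ := exists_isCompartmental_Fmat_mulVec_sub (hg_nonneg t ht)
    (fun i => hM i t ht) (hg_expand t ht) (fun i j hij => hL i j hij t ht) (hfc_anti t ht)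
    (hf0_mono t ht) hx hy hxy
  exact ⟨D, hD, fun i j hij =>
    (hD_le i j hij).trans ((hb ⟨(i, j), rfl⟩).trans (le_max_left _ _)), hD_eq⟩

/-- under (A1)–(A5) there is a finite constant `b̃ ≥ 0` such that
for all `t ≥ 0` and all ordered `x ≤ y` in the box `𝒳` there is a compartmental
matrix `D(t,x,y)` whose strictly upper-triangular entries are bounded by `b̃`
and such that
`F(t,y) g(t,y) − F(t,x) g(t,x) = (F(t,y) + D(t,x,y)) (g(t,y) − g(t,x))`. -/
theorem stmt14 (n : ℕ) (hn : 0 < n) (c : Fin n → ℝ) (hc : ∀ i, 0 < c i)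
    (f0 : Fin n → ℝ → ℝ → ℝ) (fc : Fin n → Fin n → ℝ → ℝ → ℝ)
    (g : Fin n → ℝ → ℝ → ℝ) (Ienv : Fin n → ℝ → ℝ → ℝ)
    (hA1 : (∀ i, A1fun (c i) (f0 i)) ∧ (∀ i, A1fun (c i) (g i)) ∧
      (∀ i, A1fun (c i) (Ienv i)) ∧ ∀ i j, j ≠ i → A1fun (c i) (fc i j))
    (hA2 : ∀ t ≥ (0 : ℝ), ∀ i, Ienv i t 0 = 0 ∧ Ienv i t (c i) = 0 ∧
      g i t 0 = 0 ∧ ∀ j, j ≠ i → fc i j t (c i) = 0)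
    (hA3 : ∀ t ≥ (0 : ℝ), ∀ i, ∀ xi yi : ℝ, 0 ≤ xi → xi ≤ yi → yi ≤ c i →
      yi - xi ≤ g i t yi - g i t xi)
    (hA4 : ∀ t ≥ (0 : ℝ), ∀ i j, j ≠ i → AntitoneOn (fc i j t) (Set.Icc 0 (c i)))
    (hA5 : ∀ t ≥ (0 : ℝ), ∀ i, MonotoneOn (f0 i t) (Set.Icc 0 (c i))) :
    ∃ btil : ℝ, 0 ≤ btil ∧
      ∀ t ≥ (0 : ℝ), ∀ x ∈ boxIcc c, ∀ y ∈ boxIcc c, x ≤ y →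
        ∃ D : Matrix (Fin n) (Fin n) ℝ, IsCompartmental D ∧
          (∀ i j : Fin n, i < j → D i j ≤ btil) ∧
          (Fmat f0 fc t y).mulVec (gvec g t y) - (Fmat f0 fc t x).mulVec (gvec g t x)
            = (Fmat f0 fc t y + D).mulVec (gvec g t y - gvec g t x) := by
  obtain ⟨b, hb, h⟩ := stmt14_general (fun t ht i => (hA1.2.1 i).2.1 t ht)
    (fun i => (hA1.2.1 i).exists_forall_le fun t ht => (hA2 t ht i).2.2.1) hA3
    (fun i j hij => (hA1.2.2.2 i j hij).exists_lipschitzOnWith) hA4 hA5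
  exact ⟨b, hb, fun t ht x hx y hy hxy => (h t ht x hx y hy hxy).imp fun _ hD =>
    ⟨hD.1, fun i j hij => hD.2.1 i j hij.ne, hD.2.2⟩⟩
end
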